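/- arXiv:2311.10691 — 2 statements merged into one kernel-verified Lean document; each statement's English description precedes it below -/
import Mathlib

section
/- Let (X,d) be a locally compact length space and ρ: X → (0,∞) continuous. Define the weighted length metric d_ρ(x,y) = inf{∫_a^b ρ(β_t)|β'_t| dt : β: [a,b] → X absolutely continuous from x to y}. If ∫_0^∞ ρ(β_t)|β'_t| dt = ∞ for every locally absolutely continuous curve β: [0,∞) → X that eventually leaves every compact subset of X, then (X, d_ρ) is a proper geodesic metric space. -/
open Filter MeasureTheory Set Topology
open scoped ENNReal NNReal

noncomputable section

/-- The metric speed of a curve `β` at time `t` w.r.t. a distance function `dist`. -/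
def mSpeed {X : Type*} (dst : X → X → ℝ) (β : ℝ → X) (t : ℝ) : ℝ :=
  Filter.limsup (fun e : ℝ => dst (β (t + e)) (β t) / |e|) (nhdsWithin (0 : ℝ) {0}ᶜ)

/-- The generalized metric speed `v_β(s,t)` of a curve `β` w.r.t. the family of
metrics `d`. -/
def genSpeed {X : Type*} (d : ℝ → X → X → ℝ) (β : ℝ → X) (s t : ℝ) : ℝ :=
  Filter.limsup (fun e : ℝ => (∫ u in t..(t + e), mSpeed (d s) β u) / e)
    (nhdsWithin (0 : ℝ) {0}ᶜ)

/-- Absolute continuity of a curve on `[a,b]` w.r.t. a distance function. -/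
def ACOn {X : Type*} (dst : X → X → ℝ) (β : ℝ → X) (a b : ℝ) : Prop :=
  ∃ g : ℝ → ℝ, MeasureTheory.IntegrableOn g (Set.Icc a b) ∧
    ∀ ⦃t u : ℝ⦄, t ∈ Set.Icc a b → u ∈ Set.Icc a b → t ≤ u →
      dst (β t) (β u) ≤ ∫ r in t..u, g r

/-- The standard distance on `ℝ`. -/
def rdist : ℝ → ℝ → ℝ := fun x y => |x - y|

/-- `d` is a family of metrics on `X` indexed by `s ∈ I`, each generating the
topology of `X`. -/
def IsMetricFamily {X : Type*} [TopologicalSpace X] (I : Set ℝ) (d : ℝ → X → X → ℝ) : Prop :=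
  ∀ s ∈ I,
    (∀ x : X, d s x x = 0) ∧ (∀ x y : X, x ≠ y → 0 < d s x y) ∧
    (∀ x y : X, d s x y = d s y x) ∧ (∀ x y z : X, d s x z ≤ d s x y + d s y z) ∧
    (∀ x : X, (nhds x).HasBasis (fun ε : ℝ => 0 < ε) (fun ε => {y | d s x y < ε}))

/-- Condition (C): local uniform continuity of `s ↦ d_s` in a logarithmic sense. -/
def CondC {X : Type*} [TopologicalSpace X] (I : Set ℝ) (d : ℝ → X → X → ℝ) : Prop :=
  ∀ J : Set ℝ, ∀ K : Set X, J ⊆ I → IsCompact J → IsCompact K →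
    ∃ r > (0 : ℝ), ∃ ω : ℝ → ℝ, ω 0 = 0 ∧ Monotone ω ∧ ContinuousAt ω 0 ∧
      ∀ s ∈ J, ∀ s' ∈ J, ∀ x ∈ K, ∀ y ∈ K, x ≠ y →
        sInf ((fun u => d u x y) '' J) < r →
        |Real.log (d s x y / d s' x y)| ≤ ω |s - s'|

/-- Condition (L): local log-Lipschitz dependence of `d_s` on `s`. -/
def CondL {X : Type*} [TopologicalSpace X] (I : Set ℝ) (d : ℝ → X → X → ℝ) : Prop :=
  ∀ J : Set ℝ, ∀ K : Set X, J ⊆ I → IsCompact J → IsCompact K →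
    ∃ C > (0 : ℝ), ∃ r > (0 : ℝ),
      ∀ s ∈ J, ∀ s' ∈ J, ∀ x ∈ K, ∀ y ∈ K, x ≠ y →
        sInf ((fun u => d u x y) '' J) < r →
        |Real.log (d s x y / d s' x y)| ≤ C * |s - s'|

/-- Condition (H): Lipschitz continuity of `h` in the time variable, locally
uniformly. -/
def CondH {X : Type*} [TopologicalSpace X] (I : Set ℝ) (h : ℝ → X → ℝ) : Prop :=
  ∀ J : Set ℝ, ∀ K : Set X, J ⊆ I → IsCompact J → IsCompact K →
    ∃ C' > (0 : ℝ), ∀ s ∈ J, ∀ s' ∈ J, ∀ x ∈ K, |h s x - h s' x| ≤ C' * |s - s'|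

/-- A curve `(α, β) : [a,b] → I × X` with both components absolutely continuous. -/
def CurveIn {X : Type*} (I : Set ℝ) (d : ℝ → X → X → ℝ) (α : ℝ → ℝ) (β : ℝ → X)
    (a b : ℝ) : Prop :=
  a < b ∧ ACOn rdist α a b ∧ (∀ s ∈ I, ACOn (d s) β a b) ∧ ∀ t ∈ Set.Icc a b, α t ∈ I

/-- Future directed: `α' > 0` a.e. -/
def FutureDirected (α : ℝ → ℝ) (a b : ℝ) : Prop :=
  ∀ᵐ t : ℝ, t ∈ Set.Ioo a b → 0 < deriv α t

/-- Past directed: `α' < 0` a.e. -/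
def PastDirected (α : ℝ → ℝ) (a b : ℝ) : Prop :=
  ∀ᵐ t : ℝ, t ∈ Set.Ioo a b → deriv α t < 0

/-- The causality inequality `v_β(α_t,t)² ≤ h(γ_t)² α'(t)²` a.e. -/
def CausalIneq {X : Type*} (d : ℝ → X → X → ℝ) (h : ℝ → X → ℝ) (α : ℝ → ℝ)
    (β : ℝ → X) (a b : ℝ) : Prop :=
  ∀ᵐ t : ℝ, t ∈ Set.Ioo a b →
    (genSpeed d β (α t) t) ^ 2 ≤ (h (α t) (β t)) ^ 2 * (deriv α t) ^ 2

/-- The timelike inequality `v_β(α_t,t)² < h(γ_t)² α'(t)²` a.e. -/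
def TimelikeIneq {X : Type*} (d : ℝ → X → X → ℝ) (h : ℝ → X → ℝ) (α : ℝ → ℝ)
    (β : ℝ → X) (a b : ℝ) : Prop :=
  ∀ᵐ t : ℝ, t ∈ Set.Ioo a b →
    (genSpeed d β (α t) t) ^ 2 < (h (α t) (β t)) ^ 2 * (deriv α t) ^ 2

/-- Future directed causal curve. -/
def FutureCausal {X : Type*} (I : Set ℝ) (d : ℝ → X → X → ℝ) (h : ℝ → X → ℝ)
    (α : ℝ → ℝ) (β : ℝ → X) (a b : ℝ) : Prop :=
  CurveIn I d α β a b ∧ FutureDirected α a b ∧ CausalIneq d h α β a b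

/-- Future directed timelike curve. -/
def FutureTimelike {X : Type*} (I : Set ℝ) (d : ℝ → X → X → ℝ) (h : ℝ → X → ℝ)
    (α : ℝ → ℝ) (β : ℝ → X) (a b : ℝ) : Prop :=
  CurveIn I d α β a b ∧ FutureDirected α a b ∧ TimelikeIneq d h α β a b

/-- Causal curve (future or past directed). -/
def CausalCurve {X : Type*} (I : Set ℝ) (d : ℝ → X → X → ℝ) (h : ℝ → X → ℝ)
    (α : ℝ → ℝ) (β : ℝ → X) (a b : ℝ) : Prop :=
  CurveIn I d α β a b ∧ (FutureDirected α a b ∨ PastDirected α a b) ∧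
    CausalIneq d h α β a b

/-- The causal relation `p ≤ q` in the generalized Lorentzian product. -/
def causalRel {X : Type*} (I : Set ℝ) (d : ℝ → X → X → ℝ) (h : ℝ → X → ℝ)
    (p q : ℝ × X) : Prop :=
  ∃ a b α β, FutureCausal I d h α β a b ∧
    α a = p.1 ∧ β a = p.2 ∧ α b = q.1 ∧ β b = q.2

/-- The chronological relation `p ≪ q` in the generalized Lorentzian product. -/
def chronRel {X : Type*} (I : Set ℝ) (d : ℝ → X → X → ℝ) (h : ℝ → X → ℝ)
    (p q : ℝ × X) : Prop :=
  ∃ a b α β, FutureTimelike I d h α β a b ∧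
    α a = p.1 ∧ β a = p.2 ∧ α b = q.1 ∧ β b = q.2

/-- The Lorentzian length of a curve. -/
def lorLen {X : Type*} (d : ℝ → X → X → ℝ) (h : ℝ → X → ℝ) (α : ℝ → ℝ) (β : ℝ → X)
    (a b : ℝ) : ℝ :=
  ∫ t in a..b,
    Real.sqrt ((h (α t) (β t)) ^ 2 * (deriv α t) ^ 2 - (genSpeed d β (α t) t) ^ 2)

/-- The time separation function `τ` of the generalized Lorentzian product. -/
def timeSep {X : Type*} (I : Set ℝ) (d : ℝ → X → X → ℝ) (h : ℝ → X → ℝ)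
    (p q : ℝ × X) : ℝ≥0∞ :=
  sSup {l | ∃ a b α β, FutureCausal I d h α β a b ∧
    α a = p.1 ∧ β a = p.2 ∧ α b = q.1 ∧ β b = q.2 ∧
    l = ENNReal.ofReal (lorLen d h α β a b)}

end

noncomputable section

open Filter MeasureTheory Set Topology
open scoped ENNReal

/-- The length of a curve `β : [0,1] → X` weighted by the conformal factor `g`. -/
def confLen {X : Type*} [MetricSpace X] (g : X → ℝ) (β : ℝ → X) : ℝ :=
  ∫ t in (0 : ℝ)..1, g (β t) * mSpeed (fun a b : X => dist a b) β t

/-- The conformally weighted length metric `d_g`. -/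
def confMetric {X : Type*} [MetricSpace X] (g : X → ℝ) (x y : X) : ℝ :=
  sInf {l | ∃ β : ℝ → X, ACOn (fun a b : X => dist a b) β 0 1 ∧
    β 0 = x ∧ β 1 = y ∧ l = confLen g β}

/-- `X` is a length space: the distance is the infimum of lengths of absolutely
continuous curves. -/
def IsLengthMetric (X : Type*) [MetricSpace X] : Prop :=
  ∀ x y : X, dist x y = confMetric (fun _ => (1 : ℝ)) x y

/-- A curve `β : [0,∞) → X` eventually leaves every compact set. -/
def TendsToInfinityIn {X : Type*} [TopologicalSpace X] (β : ℝ → X) : Prop :=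
  ∀ K : Set X, IsCompact K → ∃ T > (0 : ℝ), ∀ t ≥ T, β t ∉ K

/-!
Near a point `x` the distance `d_ρ` is comparable to `ρ x` times `d`, so both induce the same
topology. A rapidly Cauchy sequence for `d_ρ` can be strung along a curve on `[0, ∞)` of finite
`ρ`-length; by hypothesis this curve returns to some compact set infinitely often, and a cluster
point there is the limit of the sequence. Hence `d_ρ` is a complete locally compact length metric,
and the Hopf–Rinow–Cohn-Vossen theorem makes its closed balls compact and produces Lipschitz curves
with optimal constant. By the infinitesimal comparison, a curve that is `L`-Lipschitz for `d_ρ`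
satisfies `ρ(γ_t) |γ'_t| ≤ L`, so such a curve has `ρ`-length equal to the distance.
-/

section Speed

lemma measurable_limsup_of_lowerSemicontinuous {ι S : Type*} [TopologicalSpace S]
    [MeasurableSpace S] [OpensMeasurableSpace S] {l : Filter ι} [l.IsCountablyGenerated]
    {f : ι → S → ℝ≥0∞} (hf : ∀ i, LowerSemicontinuous (f i)) :
    Measurable fun t => limsup (fun i => f i t) l := by
  obtain ⟨s, hs⟩ := l.exists_antitone_basis
  simp_rw [hs.toHasBasis.limsup_eq_iInf_iSup, iInf_true]
  exact Measurable.iInf fun n =>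
    (lowerSemicontinuous_biSup (p := fun i => i ∈ s n) fun i _ => hf i).measurable

lemma tendsto_add_nhdsNE_zero (t : ℝ) : Tendsto (t + ·) (𝓝[≠] 0) (𝓝 t) := by
  simpa only [add_zero] using ((continuous_const_add t).tendsto 0).mono_left nhdsWithin_le_nhds

variable {X : Type*} [PseudoMetricSpace X] {β γ : ℝ → X} {t C : ℝ}

/-- The metric speed of a curve for the ambient distance. As a real-valued `limsup` it takes the
junk value `0` at times where the difference quotients are unbounded. -/
abbrev speed (β : ℝ → X) (t : ℝ) : ℝ := mSpeed (fun a b : X => dist a b) β t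

lemma speed_eq_sInf (β : ℝ → X) (t : ℝ) :
    speed β t = sInf {C | ∀ᶠ e in 𝓝[≠] (0 : ℝ), dist (β (t + e)) (β t) / |e| ≤ C} :=
  limsup_eq

lemma nonneg_of_eventually_quotient_le
    (h : ∀ᶠ e in 𝓝[≠] (0 : ℝ), dist (β (t + e)) (β t) / |e| ≤ C) : 0 ≤ C :=
  let ⟨_, he⟩ := h.exists
  le_trans (by positivity) he

lemma speed_nonneg (β : ℝ → X) (t : ℝ) : 0 ≤ speed β t := by
  rw [speed_eq_sInf]
  exact Real.sInf_nonneg fun _ => nonneg_of_eventually_quotient_le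

lemma speed_le (h : ∀ᶠ e in 𝓝[≠] (0 : ℝ), dist (β (t + e)) (β t) / |e| ≤ C) :
    speed β t ≤ C := by
  rw [speed_eq_sInf]
  exact csInf_le ⟨0, fun _ => nonneg_of_eventually_quotient_le⟩ h

lemma speed_congr (h : β =ᶠ[𝓝 t] γ) : speed β t = speed γ t := by
  refine limsup_congr ?_
  filter_upwards [(tendsto_add_nhdsNE_zero t).eventually h] with e he
  rw [he, h.self_of_nhds]

lemma speed_comp_affine (β : ℝ → X) {m : ℝ} (hm : m ≠ 0) (q t : ℝ) :
    speed (fun s => β (m * s + q)) t = |m| * speed β (m * t + q) := by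
  have hmap : map (m * ·) (𝓝[≠] 0) = 𝓝[≠] 0 := by
    simpa only [Homeomorph.coe_mulLeft₀, mul_zero] using
      (Homeomorph.mulLeft₀ m hm).map_punctured_nhds_eq 0
  have hm' := abs_pos.2 hm
  rw [speed_eq_sInf, speed_eq_sInf, ← smul_eq_mul |m|, ← Real.sInf_smul_of_nonneg hm'.le]
  congr 1
  ext C
  rw [Set.mem_smul_set_iff_inv_smul_mem₀ hm'.ne', mem_ofPred_eq, mem_ofPred_eq, smul_eq_mul]
  conv_rhs => rw [← hmap]
  rw [eventually_map]
  refine eventually_congr (Eventually.of_forall fun e => ?_)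
  rw [show m * (t + e) + q = m * t + q + m * e by ring, abs_mul, le_inv_mul_iff₀ hm',
    div_mul_eq_div_div_swap, mul_div_cancel₀ _ hm'.ne']

lemma speed_eq_toReal_limsup (β : ℝ → X) (t : ℝ) :
    speed β t = (limsup (fun e => ENNReal.ofReal (dist (β (t + e)) (β t) / |e|))
      (𝓝[≠] (0 : ℝ))).toReal := by
  by_cases hbdd : IsBoundedUnder (· ≤ ·) (𝓝[≠] 0) fun e : ℝ => dist (β (t + e)) (β t) / |e|
  · obtain ⟨C, hC⟩ := hbdd
    rw [← ENNReal.limsup_toReal_eq (b := ENNReal.ofReal C) ENNReal.ofReal_ne_top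
      ((eventually_map.1 hC).mono fun e he => ENNReal.ofReal_le_ofReal he)]
    refine limsup_congr (Eventually.of_forall fun e => ?_)
    exact (ENNReal.toReal_ofReal (by positivity)).symm
  · have htop : limsup (fun e => ENNReal.ofReal (dist (β (t + e)) (β t) / |e|))
        (𝓝[≠] (0 : ℝ)) = ∞ := by
      by_contra hne
      obtain ⟨C, hC, hCtop⟩ := exists_between (lt_top_iff_ne_top.2 hne)
      refine hbdd ⟨C.toReal, eventually_map.2 ?_⟩
      filter_upwards [eventually_lt_of_limsup_lt hC] with e he
      exact (ENNReal.ofReal_le_iff_le_toReal hCtop.ne).1 he.le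
    rw [htop, ENNReal.toReal_top]
    exact Real.limsup_of_not_isBoundedUnder hbdd

lemma measurable_speed (hβ : Continuous β) : Measurable (speed β) := by
  simp_rw [funext (speed_eq_toReal_limsup β)]
  exact (measurable_limsup_of_lowerSemicontinuous fun e =>
    (ENNReal.continuous_ofReal.comp (by fun_prop)).lowerSemicontinuous).ennreal_toReal

end Speed

section AbsolutelyContinuousCurves

variable {X : Type*} [PseudoMetricSpace X] {β γ : ℝ → X} {a b c d s t : ℝ}

/-- Absolute continuity of the restriction of a curve to `[a, b]`, for the ambient distance. -/
abbrev AbsCont (β : ℝ → X) (a b : ℝ) : Prop := ACOn (fun a b : X => dist a b) β a b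

lemma absCont_of_dist_le {C : ℝ}
    (h : ∀ s ∈ Icc a b, ∀ t ∈ Icc a b, dist (β s) (β t) ≤ C * |s - t|) : AbsCont β a b := by
  refine ⟨fun _ => C, by simp, fun s t hs ht hst => (h s hs t ht).trans_eq ?_⟩
  rw [intervalIntegral.integral_const, smul_eq_mul, abs_sub_comm, abs_of_nonneg (sub_nonneg.2 hst),
    mul_comm]

lemma absCont_const (x : X) : AbsCont (fun _ => x) a b :=
  absCont_of_dist_le (C := 0) fun _ _ _ _ => by rw [dist_self, zero_mul]

namespace AbsCont

lemma mono (h : AbsCont β a b) (hs : a ≤ s) (ht : t ≤ b) : AbsCont β s t :=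
  let ⟨g, hg, hd⟩ := h
  have hsub := Icc_subset_Icc hs ht
  ⟨g, hg.mono_set hsub, fun _ _ hx hy => hd (hsub hx) (hsub hy)⟩

lemma congr (h : AbsCont β a b) (hβγ : EqOn β γ (Icc a b)) : AbsCont γ a b := by
  obtain ⟨g, hg, hd⟩ := h
  refine ⟨g, hg, fun x y hx hy hxy => ?_⟩
  rw [← hβγ hx, ← hβγ hy]
  exact hd hx hy hxy

lemma exists_density (h : AbsCont β a b) :
    ∃ g : ℝ → ℝ, Integrable g ∧ 0 ≤ g ∧
      ∀ s ∈ Icc a b, ∀ t ∈ Icc a b, dist (β s) (β t) ≤ |∫ r in s..t, g r| := by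
  obtain ⟨g, hg, hd⟩ := h
  set g' : ℝ → ℝ := (Icc a b).indicator fun r => |g r|
  have hg' : Integrable g' := (integrable_indicator_iff measurableSet_Icc).2 hg.abs
  have key : ∀ s ∈ Icc a b, ∀ t ∈ Icc a b, s ≤ t → dist (β s) (β t) ≤ |∫ r in s..t, g' r| := by
    intro s hs t ht hst
    have hsub : Icc s t ⊆ Icc a b := Icc_subset_Icc hs.1 ht.2
    refine ((hd hs ht hst).trans ?_).trans (le_abs_self _)
    refine intervalIntegral.integral_mono_on hst
      ((intervalIntegrable_iff_integrableOn_Icc_of_le hst).2 (hg.mono_set hsub))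
      hg'.intervalIntegrable fun r hr => ?_
    rw [show g' r = |g r| from indicator_of_mem (hsub hr) _]
    exact le_abs_self _
  refine ⟨g', hg', indicator_nonneg fun _ _ => abs_nonneg _, fun s hs t ht => ?_⟩
  rcases le_total s t with hst | hst
  · exact key s hs t ht hst
  · rw [dist_comm, intervalIntegral.integral_symm, abs_neg]
    exact key t ht s hs hst

lemma trans (h₁ : AbsCont β a b) (h₂ : AbsCont β b c) : AbsCont β a c := by
  obtain ⟨g₁, hg₁, hpos₁, hd₁⟩ := h₁.exists_density
  obtain ⟨g₂, hg₂, hpos₂, hd₂⟩ := h₂.exists_density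
  have hg := hg₁.add hg₂
  have le_add : ∀ s t, s ≤ t → |∫ r in s..t, g₁ r| ≤ ∫ r in s..t, (g₁ + g₂) r ∧
      |∫ r in s..t, g₂ r| ≤ ∫ r in s..t, (g₁ + g₂) r := fun s t hst => by
    rw [abs_of_nonneg (intervalIntegral.integral_nonneg hst fun r _ => hpos₁ r),
      abs_of_nonneg (intervalIntegral.integral_nonneg hst fun r _ => hpos₂ r)]
    exact ⟨intervalIntegral.integral_mono hst hg₁.intervalIntegrable hg.intervalIntegrable
        (le_add_of_nonneg_right hpos₂),
      intervalIntegral.integral_mono hst hg₂.intervalIntegrable hg.intervalIntegrable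
        (le_add_of_nonneg_left hpos₁)⟩
  refine ⟨g₁ + g₂, hg.integrableOn, fun s t hs ht hst => ?_⟩
  rcases le_total t b with htb | hbt
  · exact (hd₁ s ⟨hs.1, hst.trans htb⟩ t ⟨ht.1, htb⟩).trans (le_add s t hst).1
  rcases le_total b s with hbs | hsb
  · exact (hd₂ s ⟨hbs, hs.2⟩ t ⟨hbt, ht.2⟩).trans (le_add s t hst).2
  calc dist (β s) (β t) ≤ dist (β s) (β b) + dist (β b) (β t) := dist_triangle _ _ _
    _ ≤ (∫ r in s..b, (g₁ + g₂) r) + ∫ r in b..t, (g₁ + g₂) r := add_le_add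
        ((hd₁ s ⟨hs.1, hsb⟩ b ⟨hs.1.trans hsb, le_rfl⟩).trans (le_add s b hsb).1)
        ((hd₂ b ⟨le_rfl, hbt.trans ht.2⟩ t ⟨hbt, ht.2⟩).trans (le_add b t hbt).2)
    _ = ∫ r in s..t, (g₁ + g₂) r := intervalIntegral.integral_add_adjacent_intervals
        hg.intervalIntegrable hg.intervalIntegrable

lemma comp_affine (h : AbsCont β c d) {m q : ℝ} (hm : m ≠ 0)
    (hmaps : MapsTo (fun t => m * t + q) (Icc a b) (Icc c d)) :
    AbsCont (fun t => β (m * t + q)) a b := by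
  obtain ⟨g, hg, hpos, hd⟩ := h.exists_density
  refine ⟨fun t => |m| * g (m * t + q),
    (((hg.comp_add_right q).comp_mul_left' hm).const_mul |m|).integrableOn,
    fun s t hs ht hst => (hd _ (hmaps hs) _ (hmaps ht)).trans_eq ?_⟩
  rw [← intervalIntegral.smul_integral_comp_mul_add, intervalIntegral.integral_const_mul,
    smul_eq_mul, abs_mul, abs_of_nonneg (intervalIntegral.integral_nonneg hst fun r _ => hpos _)]

lemma continuousOn (h : AbsCont β a b) : ContinuousOn β (Icc a b) := by
  obtain ⟨g, hg, -, hd⟩ := h.exists_density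
  intro t ht
  have hlim : Tendsto (fun s => |∫ r in t..s, g r|) (𝓝[Icc a b] t) (𝓝 0) := by
    have :=
      (intervalIntegral.continuous_primitive (fun _ _ => hg.intervalIntegrable) t).abs.tendsto t
    rw [intervalIntegral.integral_same, abs_zero] at this
    exact this.mono_left nhdsWithin_le_nhds
  refine tendsto_iff_dist_tendsto_zero.2 (squeeze_zero' (Eventually.of_forall fun _ => dist_nonneg)
    ?_ hlim)
  filter_upwards [self_mem_nhdsWithin] with s hs
  rw [dist_comm]
  exact hd t ht s hs

lemma exists_integrable_speed_le (h : AbsCont β a b) :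
    ∃ g : ℝ → ℝ, Integrable g ∧ ∀ᵐ t, t ∈ Ioo a b → speed β t ≤ g t := by
  obtain ⟨g, hg, hpos, hd⟩ := h.exists_density
  refine ⟨g, hg, ?_⟩
  filter_upwards [LocallyIntegrable.ae_hasDerivAt_integral hg.locallyIntegrable] with t hder ht
  have hslope : Tendsto (fun e : ℝ => |(∫ r in t..t + e, g r) / e|) (𝓝[≠] 0) (𝓝 (g t)) := by
    have := (hasDerivAt_iff_tendsto_slope_zero.1 (hder t)).abs
    simpa only [intervalIntegral.integral_same, sub_zero, smul_eq_mul,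
      abs_of_nonneg (hpos t), inv_mul_eq_div] using this
  refine le_of_forall_gt_imp_ge_of_dense fun C hC => speed_le ?_
  have hmem := (tendsto_add_nhdsNE_zero t).eventually (Icc_mem_nhds ht.1 ht.2)
  filter_upwards [hslope.eventually_lt_const hC, hmem] with e he heI
  refine le_trans ?_ he.le
  rw [abs_div]
  gcongr
  rw [dist_comm]
  exact hd t (Ioo_subset_Icc_self ht) _ heI

lemma intervalIntegrable_speed (h : AbsCont β a b) (hab : a ≤ b) :
    IntervalIntegrable (speed β) volume a b := by
  obtain ⟨g, hg, hle⟩ := h.exists_integrable_speed_le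
  have hext : Continuous (IccExtend hab (domRestrict (Icc a b) β)) :=
    (continuousOn_iff_continuous_domRestrict.1 h.continuousOn).Icc_extend'
  rw [intervalIntegrable_iff_integrableOn_Ioo_of_le hab]
  refine hg.integrableOn.mono' ?_ ?_
  · refine (measurable_speed hext).aestronglyMeasurable.congr ?_
    filter_upwards [ae_restrict_mem measurableSet_Ioo] with t ht
    refine speed_congr ?_
    filter_upwards [Icc_mem_nhds ht.1 ht.2] with s hs
    rw [IccExtend_of_mem _ _ hs, domRestrict_apply]
  · filter_upwards [ae_restrict_mem measurableSet_Ioo, ae_restrict_of_ae hle] with t ht hlet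
    rw [Real.norm_of_nonneg (speed_nonneg β t)]
    exact hlet ht

lemma intervalIntegrable_mul_speed (h : AbsCont β a b) (hab : a ≤ b) {ρ : X → ℝ}
    (hρ : Continuous ρ) : IntervalIntegrable (fun t => ρ (β t) * speed β t) volume a b := by
  refine (h.intervalIntegrable_speed hab).continuousOn_mul ?_
  rw [uIcc_of_le hab]
  exact hρ.comp_continuousOn h.continuousOn

end AbsCont

end AbsolutelyContinuousCurves

section WeightedLength

variable {X : Type*} [PseudoMetricSpace X] {β γ : ℝ → X} {ρ σ : X → ℝ} {a b c d : ℝ}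

/-- The length of the restriction of `β` to `[a, b]` weighted by `ρ`; for `[0, 1]` it is
`confLen ρ β`. -/
def weightedLength (ρ : X → ℝ) (β : ℝ → X) (a b : ℝ) : ℝ :=
  ∫ t in a..b, ρ (β t) * speed β t

lemma weightedLength_nonneg (hρ0 : ∀ x, 0 ≤ ρ x) (hab : a ≤ b) : 0 ≤ weightedLength ρ β a b :=
  intervalIntegral.integral_nonneg hab fun t _ => mul_nonneg (hρ0 _) (speed_nonneg β t)

lemma weightedLength_self (ρ : X → ℝ) (β : ℝ → X) (a : ℝ) : weightedLength ρ β a a = 0 :=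
  intervalIntegral.integral_same

lemma weightedLength_const_weight (k : ℝ) (β : ℝ → X) (a b : ℝ) :
    weightedLength (fun _ => k) β a b = k * weightedLength (fun _ => 1) β a b := by
  simp_rw [weightedLength, one_mul, intervalIntegral.integral_const_mul]

lemma weightedLength_const (ρ : X → ℝ) (x : X) (a b : ℝ) :
    weightedLength ρ (fun _ => x) a b = 0 := by
  have hspeed (t : ℝ) : speed (fun _ => x) t = 0 :=
    (speed_le (Eventually.of_forall fun e => by simp)).antisymm (speed_nonneg _ t)
  simp_rw [weightedLength, hspeed, mul_zero, intervalIntegral.integral_zero]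

lemma weightedLength_congr (hab : a ≤ b) (h : EqOn β γ (Ioo a b)) :
    weightedLength ρ β a b = weightedLength ρ γ a b := by
  refine intervalIntegral.integral_congr_Ioo_of_le hab fun t ht => ?_
  simp only [h ht, speed_congr (h.eventuallyEq_of_mem (isOpen_Ioo.mem_nhds ht))]

lemma weightedLength_comp_affine (ρ : X → ℝ) (β : ℝ → X) {m : ℝ} (hm : m ≠ 0) (q a b : ℝ) :
    weightedLength ρ (fun t => β (m * t + q)) a b =
      |m| / m * weightedLength ρ β (m * a + q) (m * b + q) := by
  unfold weightedLength
  rw [← intervalIntegral.smul_integral_comp_mul_add (fun t => ρ (β t) * speed β t) m q,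
    smul_eq_mul, ← mul_assoc, div_mul_cancel₀ _ hm, ← intervalIntegral.integral_const_mul]
  refine intervalIntegral.integral_congr fun t _ => ?_
  simp only [speed_comp_affine β hm q t]
  ring

namespace AbsCont

lemma weightedLength_add (h : AbsCont β a c) (hρ : Continuous ρ) (hab : a ≤ b) (hbc : b ≤ c) :
    weightedLength ρ β a b + weightedLength ρ β b c = weightedLength ρ β a c :=
  intervalIntegral.integral_add_adjacent_intervals
    ((h.mono le_rfl hbc).intervalIntegrable_mul_speed hab hρ)
    ((h.mono hab le_rfl).intervalIntegrable_mul_speed hbc hρ)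

lemma weightedLength_le_of_le (h : AbsCont β a c) (hρ : Continuous ρ) (hρ0 : ∀ x, 0 ≤ ρ x)
    (hab : a ≤ b) (hbc : b ≤ c) : weightedLength ρ β a b ≤ weightedLength ρ β a c := by
  rw [← h.weightedLength_add hρ hab hbc]
  exact le_add_of_nonneg_right (weightedLength_nonneg hρ0 hbc)

lemma weightedLength_mono_weight (h : AbsCont β a b) (hab : a ≤ b) (hρ : Continuous ρ)
    (hσ : Continuous σ) (hle : ∀ t ∈ Ioo a b, ρ (β t) ≤ σ (β t)) :
    weightedLength ρ β a b ≤ weightedLength σ β a b :=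
  intervalIntegral.integral_mono_on_of_le_Ioo hab (h.intervalIntegrable_mul_speed hab hρ)
    (h.intervalIntegrable_mul_speed hab hσ) fun t ht =>
      mul_le_mul_of_nonneg_right (hle t ht) (speed_nonneg β t)

lemma continuousOn_weightedLength (h : AbsCont β a b) (hab : a ≤ b) (hρ : Continuous ρ) :
    ContinuousOn (weightedLength ρ β a) (Icc a b) := by
  rw [← uIcc_of_le hab]
  exact intervalIntegral.continuousOn_primitive_interval'
    (h.intervalIntegrable_mul_speed hab hρ) left_mem_uIcc

lemma exists_affine_reparametrization (h : AbsCont β c d) (hcd : c < d) (hab : a < b) :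
    ∃ γ : ℝ → X, AbsCont γ a b ∧ γ a = β c ∧ γ b = β d ∧
      ∀ ρ : X → ℝ, weightedLength ρ γ a b = weightedLength ρ β c d := by
  have hm : 0 < (d - c) / (b - a) := div_pos (sub_pos.2 hcd) (sub_pos.2 hab)
  set m := (d - c) / (b - a)
  have hma : m * a + (c - m * a) = c := by ring
  have hmb : m * b + (c - m * a) = d := by
    linarith [div_mul_cancel₀ (d - c) (sub_pos.2 hab).ne', mul_sub m b a]
  refine ⟨fun t => β (m * t + (c - m * a)), h.comp_affine hm.ne' fun t ht => ?_, congrArg β hma,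
    congrArg β hmb, fun ρ => ?_⟩
  · constructor
    · linarith [mul_le_mul_of_nonneg_left ht.1 hm.le]
    · linarith [mul_le_mul_of_nonneg_left ht.2 hm.le]
  · rw [weightedLength_comp_affine ρ β hm.ne', hma, hmb, abs_of_pos hm, div_self hm.ne', one_mul]

lemma exists_reversal (h : AbsCont β a b) :
    ∃ γ : ℝ → X, AbsCont γ a b ∧ γ a = β b ∧ γ b = β a ∧
      ∀ ρ : X → ℝ, weightedLength ρ γ a b = weightedLength ρ β a b := by
  have hm : (-1 : ℝ) ≠ 0 := by norm_num
  have hma : -1 * a + (a + b) = b := by ring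
  have hmb : -1 * b + (a + b) = a := by ring
  refine ⟨fun t => β (-1 * t + (a + b)), h.comp_affine hm fun t ht => ?_, congrArg β hma,
    congrArg β hmb, fun ρ => ?_⟩
  · constructor <;> linarith [ht.1, ht.2]
  · rw [weightedLength_comp_affine ρ β hm, hma, hmb, weightedLength, intervalIntegral.integral_symm,
      abs_neg, abs_one, weightedLength]
    ring

end AbsCont

end WeightedLength

section Concatenation

/-- The curve on `[0, ∞)` that follows `β n` during `[n, n + 1)`. -/
def concat {X : Type*} (β : ℕ → ℝ → X) (t : ℝ) : X := β ⌊t⌋₊ t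

lemma concat_eqOn {X : Type*} {β : ℕ → ℝ → X}
    (hβ : ∀ n : ℕ, β n (n + 1) = β (n + 1) (n + 1)) (n : ℕ) :
    EqOn (concat β) (β n) (Icc n (n + 1)) := by
  intro t ht
  rcases ht.2.eq_or_lt with rfl | hlt
  · rw [concat, ← Nat.cast_add_one, Nat.floor_natCast, Nat.cast_add_one, hβ]
  · rw [concat, (Nat.floor_eq_iff (n.cast_nonneg.trans ht.1)).2 ⟨ht.1, hlt⟩]

lemma absCont_zero_of_nat {X : Type*} [PseudoMetricSpace X] {β : ℝ → X}
    (h : ∀ n : ℕ, AbsCont β n (n + 1)) (b : ℝ) : AbsCont β 0 b := by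
  have hnat (n : ℕ) : AbsCont β 0 n := by
    induction n with
    | zero => exact (h 0).mono Nat.cast_zero.le (by simp)
    | succ n ih => exact Nat.cast_add_one (R := ℝ) n ▸ ih.trans (h n)
  exact (hnat ⌈b⌉₊).mono le_rfl (Nat.le_ceil b)

end Concatenation

section ConformalMetric

variable {X : Type*} [MetricSpace X] {β : ℝ → X} {ρ : X → ℝ} {a b k r R : ℝ} {x y z : X}

lemma confMetric_nonneg (hρ0 : ∀ x, 0 ≤ ρ x) (x y : X) : 0 ≤ confMetric ρ x y := by
  refine Real.sInf_nonneg ?_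
  rintro _ ⟨β, -, -, -, rfl⟩
  exact weightedLength_nonneg hρ0 zero_le_one

lemma confMetric_le_confLen (hρ0 : ∀ x, 0 ≤ ρ x) (h : AbsCont β 0 1) :
    confMetric ρ (β 0) (β 1) ≤ confLen ρ β := by
  refine csInf_le ⟨0, ?_⟩ ⟨β, h, rfl, rfl, rfl⟩
  rintro _ ⟨γ, -, -, -, rfl⟩
  exact weightedLength_nonneg hρ0 zero_le_one

lemma confMetric_self (hρ0 : ∀ x, 0 ≤ ρ x) (x : X) : confMetric ρ x x = 0 :=
  ((confMetric_le_confLen hρ0 (absCont_const x)).trans_eq (weightedLength_const ρ x 0 1)).antisymm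
    (confMetric_nonneg hρ0 x x)

lemma confMetric_le_weightedLength (hρ0 : ∀ x, 0 ≤ ρ x) (h : AbsCont β a b) (hab : a ≤ b) :
    confMetric ρ (β a) (β b) ≤ weightedLength ρ β a b := by
  rcases hab.eq_or_lt with rfl | hlt
  · rw [confMetric_self hρ0]
    exact weightedLength_nonneg hρ0 le_rfl
  · obtain ⟨γ, hγ, h0, h1, hlen⟩ := h.exists_affine_reparametrization hlt zero_lt_one
    rw [← h0, ← h1, ← hlen]
    exact confMetric_le_confLen hρ0 hγ

/-- Any two points are joined by an absolutely continuous curve, so that the infimum defining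
`confMetric` is never the junk value `sInf ∅ = 0`. -/
def RectifiablyConnected (X : Type*) [MetricSpace X] : Prop :=
  ∀ x y : X, ∃ β : ℝ → X, AbsCont β 0 1 ∧ β 0 = x ∧ β 1 = y

lemma IsLengthMetric.rectifiablyConnected (hX : IsLengthMetric X) : RectifiablyConnected X := by
  intro x y
  by_contra hnone
  have hempty : {l | ∃ β : ℝ → X, AbsCont β 0 1 ∧ β 0 = x ∧ β 1 = y ∧
      l = confLen (fun _ => 1) β} = ∅ :=
    eq_empty_of_forall_notMem fun _ ⟨β, hβ, h0, h1, _⟩ => hnone ⟨β, hβ, h0, h1⟩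
  have hxy : x = y :=
    dist_eq_zero.1 ((hX x y).trans ((congrArg sInf hempty).trans Real.sInf_empty))
  exact hnone ⟨fun _ => x, absCont_const x, rfl, hxy⟩

lemma IsLengthMetric.dist_le_weightedLength (hX : IsLengthMetric X) (h : AbsCont β a b)
    (hab : a ≤ b) : dist (β a) (β b) ≤ weightedLength (fun _ => 1) β a b := by
  rw [hX]
  exact confMetric_le_weightedLength (fun _ => zero_le_one) h hab

namespace RectifiablyConnected

lemma le_confMetric (hX : RectifiablyConnected X)
    (h : ∀ β, AbsCont β 0 1 → β 0 = x → β 1 = y → r ≤ confLen ρ β) : r ≤ confMetric ρ x y := by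
  obtain ⟨β, hβ, h0, h1⟩ := hX x y
  refine le_csInf ⟨_, β, hβ, h0, h1, rfl⟩ ?_
  rintro _ ⟨γ, hγ, hγ0, hγ1, rfl⟩
  exact h γ hγ hγ0 hγ1

lemma exists_weightedLength_lt (hX : RectifiablyConnected X) (hab : a < b)
    (h : confMetric ρ x y < R) :
    ∃ β : ℝ → X, AbsCont β a b ∧ β a = x ∧ β b = y ∧ weightedLength ρ β a b < R := by
  obtain ⟨γ, hγ, rfl, rfl, hlt⟩ :
      ∃ γ : ℝ → X, AbsCont γ 0 1 ∧ γ 0 = x ∧ γ 1 = y ∧ weightedLength ρ γ 0 1 < R := by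
    contrapose! h
    exact hX.le_confMetric h
  obtain ⟨β, hβ, ha, hb, hlen⟩ := hγ.exists_affine_reparametrization zero_lt_one hab
  exact ⟨β, hβ, ha, hb, (hlen ρ).trans_lt hlt⟩

lemma confMetric_comm (hX : RectifiablyConnected X) (hρ0 : ∀ x, 0 ≤ ρ x) (x y : X) :
    confMetric ρ x y = confMetric ρ y x := by
  have key (x y : X) : confMetric ρ x y ≤ confMetric ρ y x := hX.le_confMetric fun β hβ h0 h1 => by
    obtain ⟨γ, hγ, hγ0, hγ1, hlen⟩ := hβ.exists_reversal
    rw [← h0, ← h1, ← hγ0, ← hγ1]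
    exact (confMetric_le_confLen hρ0 hγ).trans_eq (hlen ρ)
  exact (key x y).antisymm (key y x)

lemma confMetric_le_abs_weightedLength_sub (hX : RectifiablyConnected X) (hρ : Continuous ρ)
    (hρ0 : ∀ x, 0 ≤ ρ x) (hβ : AbsCont β a b) {s t : ℝ} (hs : s ∈ Icc a b) (ht : t ∈ Icc a b) :
    confMetric ρ (β s) (β t) ≤ |weightedLength ρ β a s - weightedLength ρ β a t| := by
  wlog hst : s ≤ t generalizing s t
  · rw [hX.confMetric_comm hρ0, abs_sub_comm]
    exact this ht hs (le_of_not_ge hst)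
  calc confMetric ρ (β s) (β t) ≤ weightedLength ρ β s t :=
        confMetric_le_weightedLength hρ0 (hβ.mono hs.1 ht.2) hst
    _ = weightedLength ρ β a t - weightedLength ρ β a s :=
        eq_sub_of_add_eq' ((hβ.mono le_rfl ht.2).weightedLength_add hρ hs.1 hst)
    _ ≤ |weightedLength ρ β a s - weightedLength ρ β a t| :=
        (le_abs_self _).trans_eq (abs_sub_comm _ _)

lemma exists_curve_through (hX : RectifiablyConnected X) {u : ℕ → X}
    {c : ℕ → ℝ} (hu : ∀ n, confMetric ρ (u n) (u (n + 1)) < c n) :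
    ∃ β : ℝ → X, (∀ b, AbsCont β 0 b) ∧ (∀ n : ℕ, β n = u n) ∧
      ∀ n : ℕ, weightedLength ρ β n (n + 1) < c n := by
  choose β hβ hstart hend hlen using fun n : ℕ =>
    hX.exists_weightedLength_lt (lt_add_one (n : ℝ)) (hu n)
  have heq := concat_eqOn (β := β) fun n => (hend n).trans (mod_cast (hstart (n + 1)).symm)
  refine ⟨concat β, absCont_zero_of_nat fun n => (hβ n).congr (heq n).symm, fun n => ?_,
    fun n => ?_⟩
  · rw [heq n (left_mem_Icc.2 (lt_add_one _).le), hstart]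
  · rw [weightedLength_congr (lt_add_one _).le ((heq n).mono Ioo_subset_Icc_self)]
    exact hlen n

lemma confMetric_triangle (hX : RectifiablyConnected X) (hρ : Continuous ρ)
    (hρ0 : ∀ x, 0 ≤ ρ x) (x y z : X) :
    confMetric ρ x z ≤ confMetric ρ x y + confMetric ρ y z := by
  refine le_of_forall_pos_le_add fun ε hε => ?_
  let u : ℕ → X
    | 0 => x
    | 1 => y
    | _ => z
  obtain ⟨β, hβ, hu, hlt⟩ := hX.exists_curve_through
    (c := fun n => confMetric ρ (u n) (u (n + 1)) + ε / 2)
    fun n => lt_add_of_pos_right _ (half_pos hε)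
  have h01 : weightedLength ρ β 0 1 < confMetric ρ x y + ε / 2 := by simpa [u] using hlt 0
  have h12 : weightedLength ρ β 1 2 < confMetric ρ y z + ε / 2 := by
    simpa [u, one_add_one_eq_two] using hlt 1
  have h0 : β 0 = x := mod_cast hu 0
  have h2 : β 2 = z := mod_cast hu 2
  calc confMetric ρ x z ≤ weightedLength ρ β 0 2 := by
        rw [← h0, ← h2]
        exact confMetric_le_weightedLength hρ0 (hβ 2) zero_le_two
    _ = weightedLength ρ β 0 1 + weightedLength ρ β 1 2 :=
        ((hβ 2).weightedLength_add hρ zero_le_one one_le_two).symm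
    _ ≤ confMetric ρ x y + confMetric ρ y z + ε := by linarith

end RectifiablyConnected

end ConformalMetric

section ConformalTopology

variable {X : Type*} [MetricSpace X] {β : ℝ → X} {ρ : X → ℝ} {a b k r : ℝ} {x y : X}

namespace IsLengthMetric

lemma mul_min_dist_le_weightedLength (hX : IsLengthMetric X) (hρ : Continuous ρ)
    (hρ0 : ∀ x, 0 ≤ ρ x) (hk : 0 ≤ k) (hab : a ≤ b) (hβ : AbsCont β a b)
    (hkρ : ∀ z, dist (β a) z < r → k ≤ ρ z) :
    k * min (dist (β a) (β b)) r ≤ weightedLength ρ β a b := by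
  set R := min (dist (β a) (β b)) r
  have hcont : ContinuousOn (fun t => dist (β a) (β t)) (Icc a b) :=
    (continuous_const.dist continuous_id).comp_continuousOn hβ.continuousOn
  have hexit : IsCompact (Icc a b ∩ (fun t => dist (β a) (β t)) ⁻¹' Ici R) :=
    isCompact_Icc.of_isClosed_subset (hcont.preimage_isClosed_of_isClosed isClosed_Icc isClosed_Ici)
      inter_subset_left
  obtain ⟨s, ⟨hs, hRs⟩, hfirst⟩ :=
    hexit.exists_isLeast ⟨b, right_mem_Icc.2 hab, min_le_left (dist (β a) (β b)) r⟩
  have hinside : ∀ t ∈ Ioo a s, k ≤ ρ (β t) := fun t ht => hkρ _ <| by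
    by_contra! hr
    exact ht.2.not_ge (hfirst ⟨⟨ht.1.le, ht.2.le.trans hs.2⟩, (min_le_right _ _).trans hr⟩)
  have hβs := hβ.mono le_rfl hs.2
  calc k * R ≤ k * dist (β a) (β s) := mul_le_mul_of_nonneg_left hRs hk
    _ ≤ k * weightedLength (fun _ => 1) β a s :=
        mul_le_mul_of_nonneg_left (hX.dist_le_weightedLength hβs hs.1) hk
    _ = weightedLength (fun _ => k) β a s := (weightedLength_const_weight k β a s).symm
    _ ≤ weightedLength ρ β a s := hβs.weightedLength_mono_weight hs.1 continuous_const hρ hinside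
    _ ≤ weightedLength ρ β a b := hβ.weightedLength_le_of_le hρ hρ0 hs.1 hs.2

lemma mul_min_dist_le_confMetric (hX : IsLengthMetric X) (hρ : Continuous ρ)
    (hρ0 : ∀ x, 0 ≤ ρ x) (hk : 0 ≤ k) (hkρ : ∀ z, dist x z < r → k ≤ ρ z) (y : X) :
    k * min (dist x y) r ≤ confMetric ρ x y :=
  hX.rectifiablyConnected.le_confMetric fun β hβ h0 h1 => by
    subst h0 h1
    exact hX.mul_min_dist_le_weightedLength hρ hρ0 hk zero_le_one hβ hkρ

lemma confMetric_le_mul_dist (hX : IsLengthMetric X) (hρ : Continuous ρ) (hρ0 : ∀ x, 0 ≤ ρ x)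
    (hρk : ∀ z, dist x z < r → ρ z ≤ k) (hxy : dist x y < r) :
    confMetric ρ x y ≤ k * dist x y := by
  have hlim : Tendsto (fun R => k * R) (𝓝[>] dist x y) (𝓝 (k * dist x y)) :=
    ((continuous_const_mul k).tendsto _).mono_left nhdsWithin_le_nhds
  refine ge_of_tendsto hlim ?_
  filter_upwards [Ioo_mem_nhdsGT hxy] with R hR
  have hk : 0 ≤ k := (hρ0 x).trans (hρk x ((dist_self x).trans_lt (dist_nonneg.trans_lt hxy)))
  obtain ⟨β, hβ, h0, h1, hlen⟩ := hX.rectifiablyConnected.exists_weightedLength_lt zero_lt_one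
    ((hX x y).symm.trans_lt hR.1)
  have hinside : ∀ t ∈ Ioo (0 : ℝ) 1, ρ (β t) ≤ k := fun t ht => hρk _ <| by
    calc dist x (β t) ≤ weightedLength (fun _ => 1) β 0 t :=
          h0 ▸ hX.dist_le_weightedLength (hβ.mono le_rfl ht.2.le) ht.1.le
      _ ≤ weightedLength (fun _ => 1) β 0 1 :=
          hβ.weightedLength_le_of_le continuous_const (fun _ => zero_le_one) ht.1.le ht.2.le
      _ < r := hlen.trans hR.2
  calc confMetric ρ x y ≤ weightedLength ρ β 0 1 :=
        h0 ▸ h1 ▸ confMetric_le_weightedLength hρ0 hβ zero_le_one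
    _ ≤ weightedLength (fun _ => k) β 0 1 :=
        hβ.weightedLength_mono_weight zero_le_one hρ continuous_const hinside
    _ = k * weightedLength (fun _ => 1) β 0 1 := weightedLength_const_weight k β 0 1
    _ ≤ k * R := mul_le_mul_of_nonneg_left hlen.le hk

lemma eventually_mul_dist_le_confMetric (hX : IsLengthMetric X) (hρ : Continuous ρ)
    (hρ0 : ∀ x, 0 ≤ ρ x) (hk : 0 ≤ k) (hkx : k < ρ x) :
    ∀ᶠ p in 𝓝 (x, x), k * dist p.1 p.2 ≤ confMetric ρ p.1 p.2 := by
  obtain ⟨r, hr, hball⟩ :=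
    Metric.eventually_nhds_iff_ball.1 (hρ.continuousAt.eventually (lt_mem_nhds hkx))
  have hnear := Metric.ball_mem_nhds x (half_pos (half_pos hr))
  rw [nhds_prod_eq]
  filter_upwards [prod_mem_prod hnear hnear] with ⟨y, z⟩ ⟨hy, hz⟩
  have hyz : dist y z ≤ r / 2 := by
    linarith [dist_triangle_right y z x, Metric.mem_ball.1 hy, Metric.mem_ball.1 hz]
  have hkρ : ∀ w, dist y w < r / 2 → k ≤ ρ w := fun w hw => (hball w <| by
    rw [Metric.mem_ball']; linarith [dist_triangle x y w, Metric.mem_ball'.1 hy]).le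
  simpa only [min_eq_left hyz] using hX.mul_min_dist_le_confMetric hρ hρ0 hk hkρ z

lemma nhds_basis_confMetric (hX : IsLengthMetric X) (hρ : Continuous ρ) (hρpos : ∀ x, 0 < ρ x)
    (x : X) : (𝓝 x).HasBasis (0 < ·) fun ε => {y | confMetric ρ x y < ε} := by
  have hρ0 x : 0 ≤ ρ x := (hρpos x).le
  refine ⟨fun s => ⟨fun hs => ?_, ?_⟩⟩
  · obtain ⟨r, hr, hball⟩ := Metric.mem_nhds_iff.1 (inter_mem hs
      (hρ.continuousAt.eventually (lt_mem_nhds (half_lt_self (hρpos x)))))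
    refine ⟨ρ x / 2 * r, by have := hρpos x; positivity, fun y hy => (hball ?_).1⟩
    have hlt := (hX.mul_min_dist_le_confMetric hρ hρ0 (half_pos (hρpos x)).le
      (fun z hz => (hball (Metric.mem_ball'.2 hz)).2.le) y).trans_lt hy
    rw [mul_lt_mul_iff_right₀ (half_pos (hρpos x)), min_lt_iff, or_iff_left (lt_irrefl r)] at hlt
    exact Metric.mem_ball'.2 hlt
  · rintro ⟨ε, hε, hsub⟩
    obtain ⟨r, hr, hball⟩ := Metric.eventually_nhds_iff_ball.1
      (hρ.continuousAt.eventually (gt_mem_nhds (lt_add_one (ρ x))))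
    have hlim : Tendsto (fun y => (ρ x + 1) * dist x y) (𝓝 x) (𝓝 0) := by
      have : Continuous fun y => (ρ x + 1) * dist x y := by fun_prop
      simpa only [dist_self, mul_zero] using this.tendsto x
    filter_upwards [Metric.ball_mem_nhds x hr, hlim.eventually_lt_const hε] with y hy hlt
    exact hsub ((hX.confMetric_le_mul_dist hρ hρ0 (fun z hz => (hball z (Metric.mem_ball'.2 hz)).le)
      (Metric.mem_ball'.1 hy)).trans_lt hlt)

end IsLengthMetric

end ConformalTopology

section HopfRinow

lemma totallyBounded_of_subset_thickening {Y : Type*} [PseudoMetricSpace Y] {s : Set Y}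
    (h : ∀ ε > 0, ∃ t, TotallyBounded t ∧ s ⊆ Metric.thickening ε t) : TotallyBounded s := by
  refine Metric.totallyBounded_iff.2 fun ε hε => ?_
  obtain ⟨t, ht, hst⟩ := h (ε / 2) (half_pos hε)
  obtain ⟨u, hu, htu⟩ := Metric.totallyBounded_iff.1 ht _ (half_pos hε)
  refine ⟨u, hu, fun z hz => ?_⟩
  obtain ⟨w, hw, hzw⟩ := Metric.mem_thickening_iff.1 (hst hz)
  obtain ⟨y, hy, hwy⟩ := mem_iUnion₂.1 (htu hw)
  refine mem_iUnion₂.2 ⟨y, hy, ?_⟩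
  rw [Metric.mem_ball] at hwy ⊢
  linarith [dist_triangle z w y]

/-- Any two points are joined by Lipschitz curves on `[0, 1]` whose constants are arbitrarily close
to their distance; this is how the length space property enters the Hopf–Rinow argument. -/
def HasAlmostGeodesics (Y : Type*) [PseudoMetricSpace Y] : Prop :=
  ∀ (x y : Y) (K : ℝ≥0), nndist x y < K → ∃ γ : ℝ → Y, LipschitzWith K γ ∧ γ 0 = x ∧ γ 1 = y

namespace HasAlmostGeodesics

lemma closedBall_subset_thickening {Y : Type*} [PseudoMetricSpace Y] (hY : HasAlmostGeodesics Y)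
    (x : Y) {R r δ : ℝ} (hr : 0 ≤ r) (hδ : 0 < δ) (hR : R < r + δ) :
    Metric.closedBall x R ⊆ Metric.thickening δ (Metric.closedBall x r) := by
  intro y hy
  obtain ⟨K, hK, hKr⟩ := exists_between ((Metric.mem_closedBall'.1 hy).trans_lt hR)
  lift K to ℝ≥0 using dist_nonneg.trans hK.le
  obtain ⟨γ, hγ, rfl, rfl⟩ := hY x y K (mod_cast hK)
  set c := r / (r + δ)
  have hc : (r + δ) * c = r := mul_div_cancel₀ r (by positivity)
  have hc0 : 0 ≤ c := by positivity
  have hc1 : 0 < 1 - c := sub_pos.2 ((div_lt_one (by positivity)).2 (lt_add_of_pos_right r hδ))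
  refine Metric.mem_thickening_iff.2 ⟨γ c, Metric.mem_closedBall.2 ?_, ?_⟩
  · calc dist (γ c) (γ 0) ≤ K * dist c 0 := hγ.dist_le_mul c 0
      _ = K * c := by rw [Real.dist_0_eq_abs, abs_of_nonneg hc0]
      _ ≤ (r + δ) * c := by gcongr
      _ = r := hc
  · calc dist (γ 1) (γ c) ≤ K * dist 1 c := hγ.dist_le_mul 1 c
      _ = K * (1 - c) := by rw [Real.dist_eq, abs_of_pos hc1]
      _ < (r + δ) * (1 - c) := by gcongr
      _ = δ := by linarith

variable {Y : Type*} [MetricSpace Y]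

theorem properSpace [LocallyCompactSpace Y] [CompleteSpace Y] (hY : HasAlmostGeodesics Y) :
    ProperSpace Y := by
  refine ⟨fun x r => ?_⟩
  by_contra hr
  set S : Set ℝ := {s | 0 ≤ s ∧ IsCompact (Metric.closedBall x s)}
  have h0 : (0 : ℝ) ∈ S := ⟨le_rfl, by simp⟩
  have hbdd : BddAbove S := ⟨r, fun s hs => le_of_not_ge fun hrs => hr <|
    hs.2.of_isClosed_subset Metric.isClosed_closedBall (Metric.closedBall_subset_closedBall hrs)⟩
  set R := sSup S
  have hR0 : 0 ≤ R := le_csSup hbdd h0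
  have hbounded : TotallyBounded (Metric.closedBall x R) :=
    totallyBounded_of_subset_thickening fun ε hε => by
      obtain ⟨s, hs, hsR⟩ := exists_lt_of_lt_csSup ⟨0, h0⟩ (sub_lt_self R hε)
      exact ⟨_, hs.2.totallyBounded, hY.closedBall_subset_thickening x hs.1 hε (by linarith)⟩
  obtain ⟨δ, hδ, hcompact⟩ :=
    (hbounded.isCompact_of_isClosed Metric.isClosed_closedBall).exists_isCompact_cthickening
  have hmem : R + δ / 2 ∈ S := ⟨by positivity, hcompact.of_isClosed_subset
    Metric.isClosed_closedBall ((hY.closedBall_subset_thickening x hR0 hδ (by linarith)).trans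
      (Metric.thickening_subset_cthickening δ _))⟩
  linarith [le_csSup hbdd hmem]

theorem exists_geodesic [ProperSpace Y] (hY : HasAlmostGeodesics Y) (x y : Y) :
    ∃ γ : ℝ → Y, LipschitzWith (nndist x y) γ ∧ γ 0 = x ∧ γ 1 = y := by
  obtain ⟨K, hanti, hK, hlim⟩ := exists_seq_strictAnti_tendsto (nndist x y)
  choose γ hγ h0 h1 using fun n => hY x y (K n) (hK n)
  have hbound (t : ℝ) (n : ℕ) : γ n t ∈ Metric.closedBall x (K 0 * dist t 0) := by
    rw [Metric.mem_closedBall, ← h0 n]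
    exact ((hγ n).weaken (hanti.antitone n.zero_le)).dist_le_mul t 0
  have hcluster (t : ℝ) : ∃ z, Tendsto (fun n => γ n t) (hyperfilter ℕ) (𝓝 z) := by
    obtain ⟨z, -, hz⟩ := (isCompact_closedBall x (K 0 * dist t 0)).ultrafilter_le_nhds
      ((hyperfilter ℕ).map fun n => γ n t) (le_principal_iff.2 (mem_map.2 (univ_mem' (hbound t))))
    exact ⟨z, hz⟩
  choose γ' hγ' using hcluster
  refine ⟨γ', LipschitzWith.of_dist_le_mul fun s t => ?_,
    tendsto_nhds_unique (hγ' 0) (by simp only [h0, tendsto_const_nhds]),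
    tendsto_nhds_unique (hγ' 1) (by simp only [h1, tendsto_const_nhds])⟩
  have hconst : Tendsto (fun n => K n * dist s t) (hyperfilter ℕ) (𝓝 (nndist x y * dist s t)) :=
    ((NNReal.tendsto_coe.2 hlim).mono_left Nat.hyperfilter_le_atTop).mul_const _
  exact le_of_tendsto_of_tendsto' ((hγ' s).dist (hγ' t)) hconst fun n => (hγ n).dist_le_mul s t

end HasAlmostGeodesics

lemma exists_lipschitz_reparametrization {Y : Type*} [MetricSpace Y] {β : ℝ → Y} {φ : ℝ → ℝ}
    {K : ℝ≥0} (hφ : ContinuousOn φ (Icc 0 1)) (hK : |φ 1 - φ 0| ≤ K)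
    (hβ : ∀ s ∈ Icc (0 : ℝ) 1, ∀ t ∈ Icc (0 : ℝ) 1, dist (β s) (β t) ≤ |φ s - φ t|) :
    ∃ γ : ℝ → Y, LipschitzWith K γ ∧ γ 0 = β 0 ∧ γ 1 = β 1 := by
  have hlift (p : Icc (0 : ℝ) 1) :
      ∃ τ ∈ Icc (0 : ℝ) 1, φ τ = AffineMap.lineMap (φ 0) (φ 1) (p : ℝ) := by
    have hp : AffineMap.lineMap (φ 0) (φ 1) (p : ℝ) ∈ uIcc (φ 0) (φ 1) := by
      rw [← segment_eq_uIcc]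
      exact lineMap_mem_segment ℝ _ _ p.2
    have h01 : uIcc (0 : ℝ) 1 = Icc 0 1 := uIcc_of_le zero_le_one
    obtain ⟨t, ht, hφt⟩ := intermediate_value_uIcc (h01.symm ▸ hφ) hp
    exact ⟨t, h01 ▸ ht, hφt⟩
  choose τ hτ hφτ using hlift
  have heq {s : ℝ} (hs : s ∈ Icc (0 : ℝ) 1) {p : Icc (0 : ℝ) 1}
      (hp : AffineMap.lineMap (φ 0) (φ 1) (p : ℝ) = φ s) : β (τ p) = β s :=
    dist_le_zero.1 ((hβ _ (hτ p) s hs).trans_eq (by rw [hφτ, hp, sub_self, abs_zero]))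
  have hlip : LipschitzWith K fun p => β (τ p) := LipschitzWith.of_dist_le_mul fun p q => by
    calc dist (β (τ p)) (β (τ q)) ≤ |φ (τ p) - φ (τ q)| := hβ _ (hτ p) _ (hτ q)
      _ = dist p q * |φ 1 - φ 0| := by
        rw [hφτ, hφτ, ← Real.dist_eq, dist_lineMap_lineMap, dist_comm (φ 0), Real.dist_eq (φ 1)]
        rfl
      _ ≤ K * dist p q := by rw [mul_comm]; gcongr
  refine ⟨fun t => β (τ (projIcc 0 1 zero_le_one t)),
    by simpa only [mul_one, Function.comp_def] using hlip.comp (LipschitzWith.projIcc zero_le_one),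
    heq (left_mem_Icc.2 zero_le_one) ?_, heq (right_mem_Icc.2 zero_le_one) ?_⟩
  · rw [projIcc_left, AffineMap.lineMap_apply_zero]
  · rw [projIcc_right, AffineMap.lineMap_apply_one]

end HopfRinow
section ConformalSpace

variable {X : Type*} [MetricSpace X] {ρ : X → ℝ}

/-- A copy of `X` endowed with the distance `confMetric ρ`. The hypotheses on `X` and `ρ` are
parameters because the metric axioms, and the agreement of the two topologies, depend on them. -/
@[nolint unusedArguments]
def ConformalSpace (_ : IsLengthMetric X) (_ : Continuous ρ) (_ : ∀ x, 0 < ρ x) : Type _ := X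

namespace ConformalSpace

variable {hX : IsLengthMetric X} {hρ : Continuous ρ} {hρpos : ∀ x, 0 < ρ x}

instance : MetricSpace (ConformalSpace hX hρ hρpos) :=
  MetricSpace.ofDistTopology (α := X) (confMetric ρ)
    (confMetric_self fun x => (hρpos x).le)
    (hX.rectifiablyConnected.confMetric_comm fun x => (hρpos x).le)
    (hX.rectifiablyConnected.confMetric_triangle hρ fun x => (hρpos x).le)
    (fun _ => isOpen_iff_mem_nhds.trans <|
      forall₂_congr fun x _ => (hX.nhds_basis_confMetric hρ hρpos x).mem_iff)
    (fun x y hxy => by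
      by_contra hne
      obtain ⟨ε, hε, hsub⟩ := (hX.nhds_basis_confMetric hρ hρpos x).mem_iff.1
        (isOpen_compl_singleton.mem_nhds hne)
      exact hsub (hxy.trans_lt hε) rfl)

instance [LocallyCompactSpace X] : LocallyCompactSpace (ConformalSpace hX hρ hρpos) :=
  ‹LocallyCompactSpace X›

theorem hasAlmostGeodesics : HasAlmostGeodesics (ConformalSpace hX hρ hρpos) := by
  intro x y K hK
  have hρ0 z : 0 ≤ ρ z := (hρpos z).le
  obtain ⟨β, hβ, rfl, rfl, hlen⟩ := hX.rectifiablyConnected.exists_weightedLength_lt zero_lt_one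
    (NNReal.coe_lt_coe.2 hK : confMetric (X := X) ρ x y < K)
  refine exists_lipschitz_reparametrization
    (hβ.continuousOn_weightedLength zero_le_one hρ) ?_ fun s hs t ht =>
      hX.rectifiablyConnected.confMetric_le_abs_weightedLength_sub hρ hρ0 hβ hs ht
  rw [weightedLength_self, sub_zero, abs_of_nonneg (weightedLength_nonneg hρ0 zero_le_one)]
  exact hlen.le

end ConformalSpace

end ConformalSpace

section Completeness

variable {X : Type*} [MetricSpace X] {β : ℝ → X} {ρ : X → ℝ}

/-- Every locally absolutely continuous curve leaving all compact sets has infinite `ρ`-length. -/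
def LengthDivergesAtInfinity (ρ : X → ℝ) : Prop :=
  ∀ β : ℝ → X, (∀ b > (0 : ℝ), AbsCont β 0 b) → TendsToInfinityIn β →
    ∫⁻ t in Ici (0 : ℝ), ENNReal.ofReal (ρ (β t) * speed β t) = ∞

lemma LengthDivergesAtInfinity.exists_isCompact_frequently (h : LengthDivergesAtInfinity ρ)
    (hβ : ∀ b, AbsCont β 0 b) (hfin : IntegrableOn (fun t => ρ (β t) * speed β t) (Ioi 0)) :
    ∃ K, IsCompact K ∧ ∃ᶠ t in atTop, β t ∈ K := by
  by_contra! hleave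
  refine (Integrable.lintegral_lt_top ((integrableOn_Ici_iff_integrableOn_Ioi).2 hfin)).ne
    (h β (fun b _ => hβ b) fun K hK => ?_)
  obtain ⟨T, hT⟩ := eventually_atTop.1 (hleave K hK)
  exact ⟨max T 1, by positivity, fun t ht => hT t ((le_max_left T 1).trans ht)⟩

lemma integrableOn_mul_speed_of_summable (hρ : Continuous ρ) (hρ0 : ∀ x, 0 ≤ ρ x)
    (hβ : ∀ b, AbsCont β 0 b) {c : ℕ → ℝ} (hc : Summable c)
    (hlt : ∀ n : ℕ, weightedLength ρ β n (n + 1) < c n) :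
    IntegrableOn (fun t => ρ (β t) * speed β t) (Ioi 0) := by
  have hint {a b : ℝ} (ha : 0 ≤ a) (hab : a ≤ b) :=
    ((hβ b).mono ha le_rfl).intervalIntegrable_mul_speed hab hρ
  refine integrableOn_Ioi_of_intervalIntegral_norm_bounded (∑' n, c n) 0
    (fun n : ℕ => (hint le_rfl n.cast_nonneg).1) tendsto_natCast_atTop_atTop
    (Eventually.of_forall fun n => ?_)
  calc ∫ t in (0 : ℝ)..n, ‖ρ (β t) * speed β t‖ = weightedLength ρ β 0 n := by
        simp_rw [Real.norm_of_nonneg (mul_nonneg (hρ0 _) (speed_nonneg β _)), weightedLength]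
    _ = ∑ k ∈ Finset.range n, weightedLength ρ β k (k + 1) := by
        have h := intervalIntegral.sum_integral_adjacent_intervals (a := Nat.cast) (n := n)
          fun k _ => hint k.cast_nonneg (Nat.cast_le.2 k.le_succ)
        simpa only [weightedLength, Nat.cast_zero, Nat.cast_add_one] using h.symm
    _ ≤ ∑ k ∈ Finset.range n, c k := Finset.sum_le_sum fun k _ => (hlt k).le
    _ ≤ ∑' k, c k := hc.sum_le_tsum _ fun k _ =>
        (weightedLength_nonneg hρ0 (lt_add_one (k : ℝ)).le).trans (hlt k).le

namespace ConformalSpace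

variable {hX : IsLengthMetric X} {hρ : Continuous ρ} {hρpos : ∀ x, 0 < ρ x}

lemma cauchySeq_of_integrableOn (hβ : ∀ b, AbsCont β 0 b)
    (hfin : IntegrableOn (fun t => ρ (β t) * speed β t) (Ioi 0)) :
    CauchySeq (α := ConformalSpace hX hρ hρpos) β := by
  have hlen : CauchySeq (weightedLength ρ β 0) :=
    (intervalIntegral_tendsto_integral_Ioi 0 hfin tendsto_id).cauchySeq
  refine Metric.cauchySeq_iff.2 fun ε hε => ?_
  obtain ⟨N, hN⟩ := Metric.cauchySeq_iff.1 hlen ε hε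
  refine ⟨max N 0, fun s hs t ht => lt_of_le_of_lt ?_
    (hN s ((le_max_left N 0).trans hs) t ((le_max_left N 0).trans ht))⟩
  exact hX.rectifiablyConnected.confMetric_le_abs_weightedLength_sub hρ (fun x => (hρpos x).le)
    (hβ (max s t)) ⟨(le_max_right N 0).trans hs, le_max_left s t⟩
    ⟨(le_max_right N 0).trans ht, le_max_right s t⟩

theorem completeSpace (h : LengthDivergesAtInfinity ρ) :
    CompleteSpace (ConformalSpace hX hρ hρpos) := by
  refine Metric.complete_of_convergent_controlled_sequences (fun n => (1 / 2) ^ n)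
    (fun n => by positivity) fun u hu => ?_
  obtain ⟨β, hβ, hβu, hlt⟩ := hX.rectifiablyConnected.exists_curve_through (ρ := ρ) (u := u)
    fun n => hu n n (n + 1) le_rfl n.le_succ
  have hfin := integrableOn_mul_speed_of_summable hρ (fun x => (hρpos x).le) hβ
    summable_geometric_two hlt
  obtain ⟨K, hK, hβK⟩ := h.exists_isCompact_frequently hβ hfin
  obtain ⟨x, -, hx⟩ := hK.exists_mapClusterPt_of_frequently hβK
  have hlim : Tendsto (β := ConformalSpace hX hρ hρpos) β atTop (𝓝 x) :=
    le_nhds_of_cauchy_adhp (cauchySeq_of_integrableOn hβ hfin) hx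
  exact ⟨x, (hlim.comp tendsto_natCast_atTop_atTop).congr hβu⟩

end ConformalSpace

end Completeness

section LipschitzCurves

variable {X : Type*} [MetricSpace X] {ρ : X → ℝ} {hX : IsLengthMetric X} {hρ : Continuous ρ}
  {hρpos : ∀ x, 0 < ρ x} {γ : ℝ → ConformalSpace hX hρ hρpos} {L : ℝ≥0} {a b k t : ℝ}

namespace ConformalSpace

lemma eventually_mul_dist_le (hγ : LipschitzWith L γ) (hk : 0 ≤ k) (hkt : k < ρ (γ t)) :
    ∀ᶠ p in 𝓝 (t, t), k * dist (α := X) (γ p.1) (γ p.2) ≤ L * dist p.1 p.2 := by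
  have hlim : Tendsto (Prod.map γ γ) (𝓝 (t, t)) (𝓝 (γ t, γ t)) :=
    (hγ.continuous.prodMap hγ.continuous).tendsto (t, t)
  filter_upwards [hlim.eventually
    (hX.eventually_mul_dist_le_confMetric hρ (fun x => (hρpos x).le) hk hkt)] with p hp
  exact hp.trans (hγ.dist_le_mul p.1 p.2)

lemma mul_speed_le (hγ : LipschitzWith L γ) (t : ℝ) : ρ (γ t) * speed (X := X) γ t ≤ L := by
  have key : ∀ k ∈ Ioo 0 (ρ (γ t)), k * speed (X := X) γ t ≤ L := fun k hk => by
    rw [← le_div_iff₀' hk.1]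
    refine speed_le ?_
    have hlim : Tendsto (fun e => (t + e, t)) (𝓝[≠] 0) (𝓝 (t, t)) :=
      tendsto_nhdsWithin_of_tendsto_nhds
        (Continuous.tendsto' (by fun_prop) _ _ (by rw [add_zero]))
    filter_upwards [hlim.eventually (eventually_mul_dist_le hγ hk.1.le hk.2),
      self_mem_nhdsWithin] with e he hne
    rw [dist_self_add_left, Real.norm_eq_abs] at he
    rwa [div_le_div_iff₀ (abs_pos.2 hne) hk.1, mul_comm]
  have hlim : Tendsto (fun k => k * speed (X := X) γ t) (𝓝[<] ρ (γ t))
      (𝓝 (ρ (γ t) * speed (X := X) γ t)) :=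
    ((continuous_mul_const _).tendsto _).mono_left nhdsWithin_le_nhds
  exact le_of_tendsto hlim (mem_of_superset (Ioo_mem_nhdsLT (hρpos _)) key)

lemma locallyLipschitz (hγ : LipschitzWith L γ) : LocallyLipschitz (β := X) γ := by
  intro t
  obtain ⟨k, hk, hkt⟩ := exists_between (hρpos (γ t))
  have hnear := eventually_mul_dist_le hγ hk.le hkt
  rw [nhds_prod_eq, eventually_prod_self_iff'] at hnear
  obtain ⟨U, hU, hle⟩ := hnear
  lift k to ℝ≥0 using hk.le
  refine ⟨L / k, U, hU, LipschitzOnWith.of_dist_le_mul fun s hs r hr => ?_⟩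
  rw [NNReal.coe_div, div_mul_eq_mul_div, le_div_iff₀' hk]
  exact hle s hs r hr

lemma absCont (hγ : LipschitzWith L γ) (a b : ℝ) : AbsCont (X := X) γ a b := by
  obtain ⟨C, hC⟩ := ((locallyLipschitz hγ).locallyLipschitzOn
    (s := Icc a b)).exists_lipschitzOnWith_of_compact isCompact_Icc
  exact absCont_of_dist_le hC.dist_le_mul

lemma weightedLength_le (hγ : LipschitzWith L γ) (hab : a ≤ b) :
    weightedLength (X := X) ρ γ a b ≤ L * (b - a) := by
  calc weightedLength (X := X) ρ γ a b ≤ ∫ _ in a..b, (L : ℝ) :=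
        intervalIntegral.integral_mono_on hab
          ((absCont hγ a b).intervalIntegrable_mul_speed hab hρ) intervalIntegrable_const
          fun t _ => mul_speed_le hγ t
    _ = L * (b - a) := by rw [intervalIntegral.integral_const, smul_eq_mul, mul_comm]

end ConformalSpace

end LipschitzCurves

/-- **Properness criterion** (Lemma 2.1): if every locally absolutely continuous
curve tending to infinity has infinite `ρ`-weighted length, then `(X, d_ρ)` is
proper and geodesic. -/
theorem confMetric_proper_and_geodesic {X : Type*} [MetricSpace X]
    [LocallyCompactSpace X] (hlen : IsLengthMetric X)
    (ρ : X → ℝ) (hρpos : ∀ x : X, 0 < ρ x) (hρcont : Continuous ρ)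
    (hdiv : ∀ β : ℝ → X, (∀ b > (0 : ℝ), ACOn (fun a b : X => dist a b) β 0 b) →
      TendsToInfinityIn β →
      ∫⁻ t in Set.Ici (0 : ℝ),
        ENNReal.ofReal (ρ (β t) * mSpeed (fun a b : X => dist a b) β t) = ∞) :
    -- properness: closed balls of `d_ρ` are compact
    (∀ x : X, ∀ r : ℝ, IsCompact {y : X | confMetric ρ x y ≤ r}) ∧
    -- geodesic: any two points are joined by a curve of `ρ`-length the distance
    (∀ x y : X, ∃ β : ℝ → X, ACOn (fun a b : X => dist a b) β 0 1 ∧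
      β 0 = x ∧ β 1 = y ∧ confLen ρ β = confMetric ρ x y) := by
  let Y := ConformalSpace hlen hρcont hρpos
  have hρ0 x : 0 ≤ ρ x := (hρpos x).le
  have : CompleteSpace Y := ConformalSpace.completeSpace hdiv
  have : ProperSpace Y := ConformalSpace.hasAlmostGeodesics.properSpace
  refine ⟨fun x r => ?_, fun x y => ?_⟩
  · simp_rw [hlen.rectifiablyConnected.confMetric_comm hρ0 x]
    exact isCompact_closedBall (α := Y) x r
  · obtain ⟨γ, hγ, rfl, rfl⟩ := ConformalSpace.hasAlmostGeodesics.exists_geodesic (Y := Y) x y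
    have hac := ConformalSpace.absCont hγ 0 1
    refine ⟨γ, hac, rfl, rfl, (confMetric_le_confLen hρ0 hac).antisymm' ?_⟩
    calc confLen (X := X) ρ γ ≤ dist (γ 0) (γ 1) * (1 - 0) :=
          ConformalSpace.weightedLength_le hγ zero_le_one
      _ = confMetric (X := X) ρ (γ 0) (γ 1) := by rw [sub_zero, mul_one]; rfl

end
end

section
/- Suppose γ_j = (α_j, β_j): [a,b] → I×X are causal curves converging uniformly to an absolutely continuous curve γ = (α,β). If α' > 0 a.e. (or α' < 0 a.e.), then γ is a causal curve, i.e., v_β(α_t,t)² ≤ h(γ_t)² α'(t)² a.e. -/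
open Filter MeasureTheory Set Topology
open scoped ENNReal NNReal

open Filter MeasureTheory Set Topology
open scoped ENNReal

/-- `D` is a metric on `ℝ × X` generating the product topology. -/
def IsCompatibleProdMetric {X : Type*} [TopologicalSpace X]
    (D : (ℝ × X) → (ℝ × X) → ℝ) : Prop :=
  (∀ p, D p p = 0) ∧ (∀ p q, p ≠ q → 0 < D p q) ∧ (∀ p q, D p q = D q p) ∧
  (∀ p q r, D p r ≤ D p q + D q r) ∧
  (∀ p : ℝ × X, (nhds p).HasBasis (fun ε : ℝ => 0 < ε) (fun ε => {q | D p q < ε}))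

/-!
The idea is to integrate the infinitesimal causality condition. Say that a curve `β` is
`C`-Lipschitz in the clock `α` if `dist (β t) (β u) ≤ C * |α t - α u|`. Near a point `(s, x)` the
metrics `d_{s'}` are all comparable to `d_s` with constant close to `1`, by condition (C), and `h`
is close to `h s x`. Since `α'` has a constant sign along a causal curve, integrating
`v_β ≤ h |α'|` shows that such a curve is, near `(s, x)` and for the fixed metric `d_s`,
`C`-Lipschitz in its clock for every `C > h s x`. This property involves no derivatives, so it
passes to pointwise limits, and differentiating it at a Lebesgue point of `|α'|` gives
`v_β(α_t, t) ≤ C |α'(t)|` for the limit. Finally `C` decreases to `h (γ_t)`.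
-/

section Limsup

variable {ι : Type*} {F : Filter ι} [F.NeBot] {f g : ι → ℝ}

theorem limsup_nonneg_of_eventually_nonneg (hf : ∀ᶠ i in F, 0 ≤ f i) : 0 ≤ limsup f F := by
  rw [limsup_eq]
  refine Real.sInf_nonneg fun c hc => ?_
  obtain ⟨i, hfi, hic⟩ := (hf.and hc).exists
  exact hfi.trans hic

theorem limsup_le_limsup_of_eventually_nonneg (hf : ∀ᶠ i in F, 0 ≤ f i) (hfg : f ≤ᶠ[F] g)
    (hg : F.IsBoundedUnder (· ≤ ·) g) : limsup f F ≤ limsup g F :=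
  limsup_le_limsup hfg (IsCoboundedUnder.of_frequently_ge hf.frequently) hg

theorem limsup_le_of_eventually_le_of_tendsto {c : ℝ} (hf : ∀ᶠ i in F, 0 ≤ f i)
    (hfg : f ≤ᶠ[F] g) (hg : Tendsto g F (𝓝 c)) : limsup f F ≤ c :=
  hg.limsup_eq ▸ limsup_le_limsup_of_eventually_nonneg hf hfg hg.isBoundedUnder_le

theorem limsup_le_const_mul_limsup {c : ℝ} (hc : 0 < c) (hf : ∀ᶠ i in F, 0 ≤ f i)
    (hfg : ∀ᶠ i in F, f i ≤ c * g i) (hg : F.IsBoundedUnder (· ≤ ·) g) :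
    limsup f F ≤ c * limsup g F := by
  rw [← div_le_iff₀' hc]
  refine le_limsup_of_le hg fun b hb => ?_
  rw [div_le_iff₀' hc]
  refine limsup_le_of_le (IsCoboundedUnder.of_frequently_ge hf.frequently) ?_
  filter_upwards [hfg, hb] with i hfi hgi
  exact hfi.trans (mul_le_mul_of_nonneg_left hgi hc.le)

theorem limsup_nhdsWithin_eq_limsup_comap_of_denseRange {Z κ R : Type*} [TopologicalSpace Z]
    [ConditionallyCompleteLinearOrder R] [TopologicalSpace R] [OrderClosedTopology R]
    {e : κ → Z} (he : DenseRange e) {f : Z → R} {U : Set Z} (hU : IsOpen U)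
    (hf : ContinuousOn f U) (x : Z) :
    limsup f (𝓝[U] x) = limsup (f ∘ e) (comap e (𝓝[U] x)) := by
  simp only [limsup_eq]
  congr 1
  ext c
  simp only [mem_ofPred_eq]
  refine ⟨fun h => h.comap e, fun h => ?_⟩
  obtain ⟨V, hV, hxV, hVc⟩ := mem_nhdsWithin.1 (eventually_comap.1 h)
  refine mem_nhdsWithin.2 ⟨V, hV, hxV, fun z hz => ?_⟩
  have hzcl : z ∈ closure (V ∩ U ∩ range e) := he.open_subset_closure_inter (hV.inter hU) hz
  refine ContinuousWithinAt.closure_le hzcl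
    ((hf z hz.2).mono (inter_subset_left.trans inter_subset_right)) continuousWithinAt_const ?_
  rintro _ ⟨hmem, k, rfl⟩
  exact hVc hmem k rfl

end Limsup

section Averages

theorem eventually_add_mem_of_mem_nhds {G : Type*} [TopologicalSpace G] [AddZeroClass G]
    [ContinuousAdd G] {t : G} {S : Set G} (hS : S ∈ 𝓝 t) : ∀ᶠ e in 𝓝[≠] (0 : G), t + e ∈ S := by
  have htendsto : Tendsto (t + ·) (𝓝 0) (𝓝 t) := (continuous_const_add t).tendsto' 0 t (add_zero t)
  exact (htendsto.mono_left nhdsWithin_le_nhds).eventually hS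

theorem tendsto_abs_sub_div_abs_of_hasDerivAt {f : ℝ → ℝ} {f' t : ℝ} (hf : HasDerivAt f f' t) :
    Tendsto (fun e => |f (t + e) - f t| / |e|) (𝓝[≠] 0) (𝓝 |f'|) :=
  hf.tendsto_slope_zero.abs.congr fun e => by
    rw [smul_eq_mul, inv_mul_eq_div, abs_div]

variable {f g : ℝ → ℝ} {p q t e : ℝ}

theorem ae_tendsto_average (hpq : p ≤ q) (hf : IntegrableOn f (Ioo p q)) :
    ∀ᵐ t : ℝ, t ∈ Ioo p q →
      Tendsto (fun e => (∫ u in t..(t + e), f u) / e) (𝓝[≠] 0) (𝓝 (f t)) := by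
  have hint : IntervalIntegrable f volume p q :=
    (intervalIntegrable_iff_integrableOn_Ioo_of_le hpq).2 hf
  filter_upwards [hint.ae_hasDerivAt_integral] with t ht htpq
  have htmem : t ∈ uIcc p q := uIcc_of_le hpq ▸ Ioo_subset_Icc_self htpq
  exact (ht htmem t htmem).tendsto_slope_zero.congr fun e => by simp [div_eq_inv_mul]

theorem intervalIntegral_add_div_eq (f : ℝ → ℝ) (t e : ℝ) :
    (∫ u in t..(t + e), f u) / e = (∫ u in uIoc t (t + e), f u) / |e| := by
  rw [intervalIntegral.intervalIntegral_eq_integral_uIoc]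
  rcases le_or_gt 0 e with he | he
  · simp [he, abs_of_nonneg he]
  · simp [not_le.2 he, abs_of_neg he, neg_div, div_neg]

theorem average_nonneg (hf : ∀ u, 0 ≤ f u) (t e : ℝ) : 0 ≤ (∫ u in t..(t + e), f u) / e := by
  rw [intervalIntegral_add_div_eq]
  exact div_nonneg (integral_nonneg hf) (abs_nonneg e)

theorem average_mono (hf : IntegrableOn f (Ioo p q)) (hg : IntegrableOn g (Ioo p q))
    (hfg : ∀ᵐ u : ℝ, u ∈ Ioo p q → f u ≤ g u) (ht : t ∈ Ioo p q) (hte : t + e ∈ Ioo p q) :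
    (∫ u in t..(t + e), f u) / e ≤ (∫ u in t..(t + e), g u) / e := by
  have hsub : uIoc t (t + e) ⊆ Ioo p q :=
    uIoc_subset_uIcc.trans (ordConnected_Ioo.uIcc_subset ht hte)
  rw [intervalIntegral_add_div_eq, intervalIntegral_add_div_eq]
  refine div_le_div_of_nonneg_right ?_ (abs_nonneg e)
  exact setIntegral_mono_on_ae (hf.mono_set hsub) (hg.mono_set hsub) measurableSet_uIoc
    (hfg.mono fun u hu hmem => hu (hsub hmem))

theorem average_le_const_mul {c : ℝ} (hf : IntegrableOn f (Ioo p q))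
    (hg : IntegrableOn g (Ioo p q)) (hfg : ∀ᵐ u : ℝ, u ∈ Ioo p q → f u ≤ c * g u)
    (ht : t ∈ Ioo p q) (hte : t + e ∈ Ioo p q) :
    (∫ u in t..(t + e), f u) / e ≤ c * ((∫ u in t..(t + e), g u) / e) := by
  rw [← mul_div_assoc, ← intervalIntegral.integral_const_mul]
  exact average_mono hf (hg.const_mul c) hfg ht hte

theorem intervalIntegral_mono_of_ae_Ioo (hpq : p ≤ q) (hf : IntegrableOn f (Ioo p q))
    (hg : IntegrableOn g (Ioo p q)) (hfg : ∀ᵐ u : ℝ, u ∈ Ioo p q → f u ≤ g u) :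
    ∫ u in p..q, f u ≤ ∫ u in p..q, g u := by
  simp only [intervalIntegral.integral_of_le hpq, integral_Ioc_eq_integral_Ioo]
  exact setIntegral_mono_on_ae hf hg measurableSet_Ioo hfg

theorem integral_abs_eq_abs_integral {Ω : Type*} {_ : MeasurableSpace Ω} {μ : Measure Ω}
    {f : Ω → ℝ} (hf : 0 ≤ᵐ[μ] f ∨ f ≤ᵐ[μ] 0) : ∫ x, |f x| ∂μ = |∫ x, f x ∂μ| := by
  rcases hf with hf | hf
  · rw [abs_of_nonneg (integral_nonneg_of_ae hf)]
    exact integral_congr_ae (hf.mono fun x hx => abs_of_nonneg hx)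
  · rw [abs_of_nonpos (integral_nonpos_of_ae hf), ← integral_neg]
    exact integral_congr_ae (hf.mono fun x hx => abs_of_nonpos hx)

end Averages

/-- `β` is `C`-Lipschitz in the clock `α` on `S`: the distance between two positions is at most
`C` times the clock time elapsed. This is the integrated, derivative-free form of the causality
inequality, the time component of a curve being its clock. -/
def ClockLipschitzOn {X : Type*} (dst : X → X → ℝ) (α : ℝ → ℝ) (β : ℝ → X) (C : ℝ)
    (S : Set ℝ) : Prop :=
  ∀ t ∈ S, ∀ u ∈ S, dst (β t) (β u) ≤ C * |α t - α u|

section MetricSpeed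

variable {X : Type*} {dst : X → X → ℝ} {α : ℝ → ℝ} {β β' : ℝ → X} {a b C t : ℝ} {S : Set ℝ}

theorem mSpeed_nonneg (hdst : ∀ x y, 0 ≤ dst x y) (β : ℝ → X) (t : ℝ) : 0 ≤ mSpeed dst β t :=
  limsup_nonneg_of_eventually_nonneg <|
    .of_forall fun e => div_nonneg (hdst _ _) (abs_nonneg e)

theorem genSpeed_nonneg {d : ℝ → X → X → ℝ} {s : ℝ} (hd : ∀ x y, 0 ≤ d s x y) (β : ℝ → X)
    (t : ℝ) : 0 ≤ genSpeed d β s t :=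
  limsup_nonneg_of_eventually_nonneg <|
    .of_forall fun e => average_nonneg (mSpeed_nonneg hd β) t e

theorem mSpeed_congr (h : β =ᶠ[𝓝 t] β') : mSpeed dst β t = mSpeed dst β' t := by
  refine limsup_congr ?_
  filter_upwards [eventually_add_mem_of_mem_nhds h] with e he
  rw [h.eq_of_nhds, show β (t + e) = β' (t + e) from he]

theorem mSpeed_le_const_mul {dst' : X → X → ℝ} {c : ℝ} (hc : 0 < c)
    (hdst : ∀ x y, 0 ≤ dst x y) (hle : ∀ᶠ u in 𝓝 t, dst (β u) (β t) ≤ c * dst' (β u) (β t))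
    (hbdd : (𝓝[≠] 0).IsBoundedUnder (· ≤ ·) fun e => dst' (β (t + e)) (β t) / |e|) :
    mSpeed dst β t ≤ c * mSpeed dst' β t := by
  refine limsup_le_const_mul_limsup hc
    (.of_forall fun e => div_nonneg (hdst _ _) (abs_nonneg e)) ?_ hbdd
  filter_upwards [eventually_add_mem_of_mem_nhds hle] with e he
  rw [← mul_div_assoc]
  exact div_le_div_of_nonneg_right he (abs_nonneg e)

theorem ACOn.mono {p q : ℝ} (hβ : ACOn dst β a b) (hp : a ≤ p) (hq : q ≤ b) :
    ACOn dst β p q := by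
  obtain ⟨g, hg, hle⟩ := hβ
  have hsub := Icc_subset_Icc hp hq
  exact ⟨g, hg.mono_set hsub, fun t u ht hu => hle (hsub ht) (hsub hu)⟩

theorem ClockLipschitzOn.eventually_div_abs_le (hβ : ClockLipschitzOn dst α β C S)
    (hS : S ∈ 𝓝 t) :
    ∀ᶠ e in 𝓝[≠] 0, dst (β (t + e)) (β t) / |e| ≤ C * (|α (t + e) - α t| / |e|) := by
  filter_upwards [eventually_add_mem_of_mem_nhds hS] with e he
  rw [← mul_div_assoc]
  exact div_le_div_of_nonneg_right (hβ _ he _ (mem_of_mem_nhds hS)) (abs_nonneg e)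

theorem ClockLipschitzOn.isBoundedUnder_div_abs {α' : ℝ} (hβ : ClockLipschitzOn dst α β C S)
    (hS : S ∈ 𝓝 t) (hα : HasDerivAt α α' t) :
    (𝓝[≠] 0).IsBoundedUnder (· ≤ ·) fun e => dst (β (t + e)) (β t) / |e| :=
  ((tendsto_abs_sub_div_abs_of_hasDerivAt hα).const_mul C).isBoundedUnder_le.mono_le
    (hβ.eventually_div_abs_le hS)

theorem ClockLipschitzOn.mSpeed_le {α' : ℝ} (hdst : ∀ x y, 0 ≤ dst x y)
    (hβ : ClockLipschitzOn dst α β C S) (hS : S ∈ 𝓝 t) (hα : HasDerivAt α α' t) :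
    mSpeed dst β t ≤ C * |α'| :=
  limsup_le_of_eventually_le_of_tendsto
    (.of_forall fun e => div_nonneg (hdst _ _) (abs_nonneg e)) (hβ.eventually_div_abs_le hS)
    ((tendsto_abs_sub_div_abs_of_hasDerivAt hα).const_mul C)

theorem ClockLipschitzOn.acOn (hβ : ClockLipschitzOn dst α β C (Icc a b))
    (hα : ACOn rdist α a b) : ACOn dst β a b := by
  obtain ⟨g, hg, hle⟩ := hα
  refine ⟨fun r => |C| * g r, hg.const_mul |C|, fun t u ht hu htu => ?_⟩
  rw [intervalIntegral.integral_const_mul]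
  exact (hβ t ht u hu).trans
    (mul_le_mul (le_abs_self C) (hle ht hu htu) (abs_nonneg _) (abs_nonneg C))

end MetricSpeed

section AbsolutelyContinuousCurve

variable {Y : Type*} [PseudoMetricSpace Y] {α : ℝ → ℝ} {β : ℝ → Y} {a b C t : ℝ} {S : Set ℝ}

theorem ClockLipschitzOn.of_lt
    (h : ∀ t ∈ S, ∀ u ∈ S, t < u → dist (β t) (β u) ≤ C * |α u - α t|) :
    ClockLipschitzOn dist α β C S := by
  intro t ht u hu
  rcases lt_trichotomy t u with htu | rfl | hut
  · exact abs_sub_comm (α u) (α t) ▸ h t ht u hu htu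
  · simp
  · exact dist_comm (β u) (β t) ▸ h u hu t ht hut

theorem ClockLipschitzOn.of_tendsto {ι : Type*} {l : Filter ι} [l.NeBot] {αs : ι → ℝ → ℝ}
    {βs : ι → ℝ → Y} (h : ∀ᶠ j in l, ClockLipschitzOn dist (αs j) (βs j) C S)
    (hα : ∀ t ∈ S, Tendsto (αs · t) l (𝓝 (α t))) (hβ : ∀ t ∈ S, Tendsto (βs · t) l (𝓝 (β t))) :
    ClockLipschitzOn dist α β C S := fun t ht u hu =>
  le_of_tendsto_of_tendsto ((hβ t ht).dist (hβ u hu))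
    (((hα t ht).sub (hα u hu)).abs.const_mul C) (h.mono fun _ hj => hj t ht u hu)

theorem ClockLipschitzOn.continuousOn (hβ : ClockLipschitzOn dist α β C S)
    (hα : ContinuousOn α S) : ContinuousOn β S := by
  intro t ht
  refine tendsto_iff_dist_tendsto_zero.2 (squeeze_zero' (.of_forall fun _ => dist_nonneg)
    (eventually_nhdsWithin_of_forall fun u hu => hβ u hu t ht) ?_)
  simpa using ((hα t ht).tendsto.sub_const (α t)).abs.const_mul C

theorem ClockLipschitzOn.absolutelyContinuousOnInterval
    (hβ : ClockLipschitzOn dist α β C (uIcc a b)) (hα : AbsolutelyContinuousOnInterval α a b) :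
    AbsolutelyContinuousOnInterval β a b := by
  refine squeeze_zero' (.of_forall fun E => Finset.sum_nonneg fun _ _ => dist_nonneg) ?_
    (hα.const_mul C)
  filter_upwards [mem_inf_of_right (mem_principal_self _)] with E hE
  refine Finset.sum_le_sum fun i hi => (hβ _ (hE.1 i hi).1 _ (hE.1 i hi).2).trans ?_
  rw [Real.dist_eq, ← mul_sub, abs_mul]
  exact mul_le_mul_of_nonneg_right (le_abs_self C) (abs_nonneg _)

theorem ACOn.exists_clockLipschitzOn_integral (hβ : ACOn dist β a b) (hab : a ≤ b) :
    ∃ g : ℝ → ℝ, IntervalIntegrable g volume a b ∧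
      ClockLipschitzOn dist (fun t => ∫ r in a..t, g r) β 1 (uIcc a b) := by
  obtain ⟨g, hg, hle⟩ := hβ
  rw [uIcc_of_le hab]
  have hint : ∀ t ∈ Icc a b, IntervalIntegrable g volume a t := fun t ht =>
    (intervalIntegrable_iff_integrableOn_Icc_of_le ht.1).2
      (hg.mono_set (Icc_subset_Icc_right ht.2))
  refine ⟨g, hint b (right_mem_Icc.2 hab), .of_lt fun t ht u hu htu => ?_⟩
  rw [one_mul, intervalIntegral.integral_interval_sub_left (hint u hu) (hint t ht)]
  exact (hle ht hu htu.le).trans (le_abs_self _)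

theorem ACOn.absolutelyContinuousOnInterval (hβ : ACOn dist β a b) (hab : a ≤ b) :
    AbsolutelyContinuousOnInterval β a b := by
  obtain ⟨g, hg, hclock⟩ := hβ.exists_clockLipschitzOn_integral hab
  exact hclock.absolutelyContinuousOnInterval
    (hg.absolutelyContinuousOnInterval_intervalIntegral left_mem_uIcc)

theorem ACOn.continuousOn (hβ : ACOn dist β a b) (hab : a ≤ b) : ContinuousOn β (Icc a b) := by
  obtain ⟨g, hg, hclock⟩ := hβ.exists_clockLipschitzOn_integral hab
  rw [← uIcc_of_le hab]
  exact hclock.continuousOn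
    (hg.absolutelyContinuousOnInterval_intervalIntegral left_mem_uIcc).continuousOn

theorem ACOn.exists_ae_isBoundedUnder_and_mSpeed_le (hβ : ACOn dist β a b) (hab : a ≤ b) :
    ∃ g : ℝ → ℝ, IntegrableOn g (Ioo a b) ∧ ∀ᵐ t : ℝ, t ∈ Ioo a b →
      ((𝓝[≠] 0).IsBoundedUnder (· ≤ ·) fun e => dist (β (t + e)) (β t) / |e|) ∧
        mSpeed dist β t ≤ g t := by
  obtain ⟨g, hg, hclock⟩ := hβ.exists_clockLipschitzOn_integral hab
  refine ⟨fun t => |g t|, ((intervalIntegrable_iff_integrableOn_Ioo_of_le hab).1 hg).abs, ?_⟩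
  filter_upwards [hg.ae_hasDerivAt_integral] with t hderiv ht
  rw [uIcc_of_le hab] at hclock hderiv
  have hG := hderiv (Ioo_subset_Icc_self ht) a (left_mem_Icc.2 hab)
  have hnhds := Icc_mem_nhds ht.1 ht.2
  exact ⟨hclock.isBoundedUnder_div_abs hnhds hG,
    one_mul |g t| ▸ hclock.mSpeed_le (fun _ _ => dist_nonneg) hnhds hG⟩

theorem measurable_mSpeed (hβ : Continuous β) : Measurable (mSpeed dist β) := by
  have hrat : mSpeed dist β = fun t =>
      limsup (fun q : ℚ => dist (β (t + q)) (β t) / |(q : ℝ)|) (comap (↑) (𝓝[≠] (0 : ℝ))) := by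
    funext t
    refine limsup_nhdsWithin_eq_limsup_comap_of_denseRange Rat.denseRange_cast
      isOpen_compl_singleton (ContinuousOn.div (by fun_prop) (by fun_prop) fun e he => ?_) 0
    exact abs_ne_zero.2 he
  rw [hrat]
  obtain ⟨s, hs⟩ := (comap ((↑) : ℚ → ℝ) (𝓝[≠] 0)).exists_antitone_basis
  refine Measurable.limsup' (fun q => ?_) ⟨hs.1, to_countable _⟩ fun _ => to_countable _
  exact Continuous.measurable (by fun_prop)

theorem ACOn.aestronglyMeasurable_mSpeed (hβ : ACOn dist β a b) (hab : a ≤ b) :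
    AEStronglyMeasurable (mSpeed dist β) (volume.restrict (Ioo a b)) := by
  have hcont : Continuous (IccExtend hab ((Icc a b).domRestrict β)) :=
    (hβ.continuousOn hab).domRestrict.Icc_extend'
  refine (measurable_mSpeed hcont).aestronglyMeasurable.congr ?_
  filter_upwards [ae_restrict_mem measurableSet_Ioo] with t ht
  refine mSpeed_congr ?_
  filter_upwards [Icc_mem_nhds ht.1 ht.2] with u hu
  exact IccExtend_of_mem hab _ hu

theorem ACOn.integrableOn_mSpeed (hβ : ACOn dist β a b) (hab : a ≤ b) :
    IntegrableOn (mSpeed dist β) (Ioo a b) := by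
  obtain ⟨g, hg, hle⟩ := hβ.exists_ae_isBoundedUnder_and_mSpeed_le hab
  refine Integrable.mono' hg (hβ.aestronglyMeasurable_mSpeed hab) ?_
  filter_upwards [ae_restrict_of_ae hle, ae_restrict_mem measurableSet_Ioo] with t ht htab
  rw [Real.norm_of_nonneg (mSpeed_nonneg (fun _ _ => dist_nonneg) β t)]
  exact (ht htab).2

theorem ACOn.ae_mSpeed_le_const_mul {dst : Y → Y → ℝ} {c : ℝ} {V : Set Y}
    (hβ : ACOn dist β a b) (hab : a ≤ b) (hdst : ∀ x y, 0 ≤ dst x y) (hc : 0 < c)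
    (hle : ∀ x ∈ V, ∀ y ∈ V, dst x y ≤ c * dist x y) (hβV : MapsTo β (Ioo a b) V) :
    ∀ᵐ t : ℝ, t ∈ Ioo a b → mSpeed dst β t ≤ c * mSpeed dist β t := by
  obtain ⟨_, -, hbdd⟩ := hβ.exists_ae_isBoundedUnder_and_mSpeed_le hab
  filter_upwards [hbdd] with t ht htab
  refine mSpeed_le_const_mul hc hdst ?_ (ht htab).1
  filter_upwards [Ioo_mem_nhds htab.1 htab.2] with u hu
  exact hle _ (hβV hu) _ (hβV htab)

theorem abs_deriv_dist_le_mSpeed (y : Y)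
    (hbdd : (𝓝[≠] 0).IsBoundedUnder (· ≤ ·) fun e => dist (β (t + e)) (β t) / |e|) :
    |deriv (fun r => dist y (β r)) t| ≤ mSpeed dist β t := by
  by_cases hdiff : DifferentiableAt ℝ (fun r => dist y (β r)) t
  · have hslope := tendsto_abs_sub_div_abs_of_hasDerivAt hdiff.hasDerivAt
    rw [← hslope.limsup_eq]
    refine limsup_le_limsup_of_eventually_nonneg (.of_forall fun e => by positivity)
      (.of_forall fun e => div_le_div_of_nonneg_right ?_ (abs_nonneg e)) hbdd
    rw [dist_comm y, dist_comm y]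
    exact abs_dist_sub_le _ _ _
  · rw [deriv_zero_of_not_differentiableAt hdiff, abs_zero]
    exact mSpeed_nonneg (fun _ _ => dist_nonneg) β t

theorem ACOn.dist_le_integral_mSpeed (hβ : ACOn dist β a b) (hab : a ≤ b) :
    dist (β a) (β b) ≤ ∫ r in a..b, mSpeed dist β r := by
  have hφ : AbsolutelyContinuousOnInterval (fun r => dist (β a) (β r)) a b := by
    obtain ⟨g, hg, hclock⟩ := hβ.exists_clockLipschitzOn_integral hab
    refine ClockLipschitzOn.absolutelyContinuousOnInterval (C := 1) (fun t ht u hu => ?_)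
      (hg.absolutelyContinuousOnInterval_intervalIntegral left_mem_uIcc)
    exact (dist_dist_dist_le_right _ _ _).trans (hclock t ht u hu)
  obtain ⟨_, -, hbdd⟩ := hβ.exists_ae_isBoundedUnder_and_mSpeed_le hab
  calc dist (β a) (β b) = ∫ r in a..b, deriv (fun r => dist (β a) (β r)) r := by
        rw [hφ.integral_deriv_eq_sub, dist_self, sub_zero]
    _ ≤ ∫ r in a..b, mSpeed dist β r := by
        refine intervalIntegral_mono_of_ae_Ioo hab
          ((intervalIntegrable_iff_integrableOn_Ioo_of_le hab).1 hφ.intervalIntegrable_deriv)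
          (hβ.integrableOn_mSpeed hab) (hbdd.mono fun t ht htab => ?_)
        exact (le_abs_self _).trans (abs_deriv_dist_le_mSpeed _ (ht htab).1)

end AbsolutelyContinuousCurve

section MetricFamily

/-- The pseudometric structure of a distance function whose balls are bases of neighbourhoods for
the given topology. That topology is the one the structure carries, definitionally. -/
@[reducible]
def pseudoMetricSpaceOfHasBasis {Y : Type*} [TopologicalSpace Y] (dst : Y → Y → ℝ)
    (hself : ∀ x, dst x x = 0) (hsymm : ∀ x y, dst x y = dst y x)
    (htri : ∀ x y z, dst x z ≤ dst x y + dst y z)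
    (hbasis : ∀ x, (𝓝 x).HasBasis (fun ε : ℝ => 0 < ε) fun ε => {y | dst x y < ε}) :
    PseudoMetricSpace Y :=
  .ofDistTopology dst hself hsymm htri fun _ =>
    isOpen_iff_mem_nhds.trans <| forall₂_congr fun x _ => (hbasis x).mem_iff

/-- Two distance functions bound each other on `V` up to the factor `c`. -/
def DistComparableOn {Y : Type*} (dst dst' : Y → Y → ℝ) (c : ℝ) (V : Set Y) : Prop :=
  ∀ x ∈ V, ∀ y ∈ V, dst x y ≤ c * dst' x y ∧ dst' x y ≤ c * dst x y

variable {X : Type*} [TopologicalSpace X] {I : Set ℝ} {d : ℝ → X → X → ℝ} {β : ℝ → X}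
  {a b c s t : ℝ} {V : Set X}

/-- The pseudometric structure on `X` whose distance is `d s`. -/
@[reducible]
def IsMetricFamily.pseudoMetricSpace (hd : IsMetricFamily I d) (hs : s ∈ I) :
    PseudoMetricSpace X :=
  pseudoMetricSpaceOfHasBasis (d s) (hd s hs).1 (hd s hs).2.2.1 (hd s hs).2.2.2.1
    (hd s hs).2.2.2.2

theorem IsMetricFamily.nonneg (hd : IsMetricFamily I d) (hs : s ∈ I) (x y : X) : 0 ≤ d s x y :=
  @dist_nonneg X (hd.pseudoMetricSpace hs) x y

theorem IsMetricFamily.integrableOn_mSpeed (hd : IsMetricFamily I d) (hs : s ∈ I)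
    (hβ : ACOn (d s) β a b) (hab : a ≤ b) : IntegrableOn (mSpeed (d s) β) (Ioo a b) :=
  @ACOn.integrableOn_mSpeed X (hd.pseudoMetricSpace hs) β a b hβ hab

theorem IsMetricFamily.continuousAt (hd : IsMetricFamily I d) (hs : s ∈ I)
    (hβ : ACOn (d s) β a b) (ht : t ∈ Ioo a b) : ContinuousAt β t :=
  (@ACOn.continuousOn X (hd.pseudoMetricSpace hs) β a b hβ (ht.1.trans ht.2).le).continuousAt
    (Icc_mem_nhds ht.1 ht.2)

theorem IsMetricFamily.ae_mSpeed_le_const_mul_genSpeed (hd : IsMetricFamily I d) (hs : s ∈ I)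
    (hc : 0 < c) (hβ : ∀ s ∈ I, ACOn (d s) β a b) (hab : a ≤ b) (hβV : MapsTo β (Ioo a b) V) :
    ∀ᵐ t : ℝ, t ∈ Ioo a b → ∀ s' ∈ I, DistComparableOn (d s) (d s') c V →
      mSpeed (d s) β t ≤ c * genSpeed d β s' t := by
  have hint : ∀ s ∈ I, IntegrableOn (mSpeed (d s) β) (Ioo a b) := fun s hs =>
    hd.integrableOn_mSpeed hs (hβ s hs) hab
  filter_upwards [ae_tendsto_average hab (hint s hs)] with t hlim ht s' hs' hcomp
  have hle : ∀ᵐ u : ℝ, u ∈ Ioo a b → mSpeed (d s) β u ≤ c * mSpeed (d s') β u :=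
    @ACOn.ae_mSpeed_le_const_mul X (hd.pseudoMetricSpace hs') β a b (d s) c V (hβ s' hs') hab
      (hd.nonneg hs) hc (fun x hx y hy => (hcomp x hx y hy).1) hβV
  -- This direction bounds the averages of `mSpeed (d s') β`, so that `genSpeed` is not junk.
  have hge : ∀ᵐ u : ℝ, u ∈ Ioo a b → mSpeed (d s') β u ≤ c * mSpeed (d s) β u :=
    @ACOn.ae_mSpeed_le_const_mul X (hd.pseudoMetricSpace hs) β a b (d s') c V (hβ s hs) hab
      (hd.nonneg hs') hc (fun x hx y hy => (hcomp x hx y hy).2) hβV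
  have hmem := eventually_add_mem_of_mem_nhds (Ioo_mem_nhds ht.1 ht.2)
  rw [← (hlim ht).limsup_eq]
  refine limsup_le_const_mul_limsup hc
    (.of_forall fun e => average_nonneg (mSpeed_nonneg (hd.nonneg hs) β) t e) ?_ ?_
  · exact hmem.mono fun e he => average_le_const_mul (hint s hs) (hint s' hs') hle ht he
  · exact ((hlim ht).const_mul c).isBoundedUnder_le.mono_le <|
      hmem.mono fun e he => average_le_const_mul (hint s' hs') (hint s hs) hge ht he

theorem ACOn.integrableOn_deriv {α : ℝ → ℝ} (hα : ACOn rdist α a b) (hab : a ≤ b) :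
    IntegrableOn (deriv α) (Ioo a b) :=
  (intervalIntegrable_iff_integrableOn_Ioo_of_le hab).1
    (ACOn.absolutelyContinuousOnInterval hα hab).intervalIntegrable_deriv

theorem ClockLipschitzOn.genSpeed_le {α : ℝ → ℝ} {C : ℝ} (hd : IsMetricFamily I d) (hs : s ∈ I)
    (hβ : ClockLipschitzOn (d s) α β C (Icc a b)) (hα : ACOn rdist α a b) (ht : t ∈ Ioo a b)
    (hlim : Tendsto (fun e => (∫ u in t..(t + e), |deriv α u|) / e) (𝓝[≠] 0) (𝓝 |deriv α t|)) :
    genSpeed d β s t ≤ C * |deriv α t| := by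
  have hab : a ≤ b := (ht.1.trans ht.2).le
  have hαac : AbsolutelyContinuousOnInterval α a b := ACOn.absolutelyContinuousOnInterval hα hab
  have hspeed : ∀ᵐ u : ℝ, u ∈ Ioo a b → mSpeed (d s) β u ≤ C * |deriv α u| := by
    filter_upwards [hαac.ae_differentiableAt] with u hdiff hu
    exact hβ.mSpeed_le (hd.nonneg hs) (Icc_mem_nhds hu.1 hu.2)
      (hdiff (uIcc_of_le hab ▸ Ioo_subset_Icc_self hu)).hasDerivAt
  refine limsup_le_of_eventually_le_of_tendsto
    (.of_forall fun e => average_nonneg (mSpeed_nonneg (hd.nonneg hs) β) t e) ?_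
    (hlim.const_mul C)
  filter_upwards [eventually_add_mem_of_mem_nhds (Ioo_mem_nhds ht.1 ht.2)] with e he
  exact average_le_const_mul (hd.integrableOn_mSpeed hs (hβ.acOn hα) hab)
    (hα.integrableOn_deriv hab).abs hspeed ht he

theorem le_mul_of_abs_log_div_le_log {x y : ℝ} (hx : 0 < x) (hy : 0 < y) (hc : 0 < c)
    (hlog : |Real.log (x / y)| ≤ Real.log c) : x ≤ c * y ∧ y ≤ c * x := by
  obtain ⟨hlower, hupper⟩ := abs_le.1 hlog
  rw [← Real.log_inv, Real.log_le_log_iff (inv_pos.2 hc) (div_pos hx hy),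
    inv_le_iff_one_le_mul₀' hc, ← mul_div_assoc, one_le_div₀ hy] at hlower
  rw [Real.log_le_log_iff (div_pos hx hy) hc, div_le_iff₀ hy] at hupper
  exact ⟨hupper, hlower⟩

theorem CondC.exists_distComparableOn [WeaklyLocallyCompactSpace X] (hdC : CondC I d)
    (hd : IsMetricFamily I d) (hI : I ∈ 𝓝 s) (x₀ : X) (hc : 1 < c) :
    ∃ U ∈ 𝓝 s, ∃ V ∈ 𝓝 x₀, ∀ s' ∈ U, DistComparableOn (d s) (d s') c V := by
  obtain ⟨J, hJs, hJI, hJ⟩ := local_compact_nhds hI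
  obtain ⟨K, hK, hKx⟩ := exists_compact_mem_nhds x₀
  obtain ⟨r, hr, ω, hω0, -, hω, hlog⟩ := hdC J K hJI hJ hK
  have hs : s ∈ I := mem_of_mem_nhds hI
  have hωc : ∀ᶠ s' in 𝓝 s, ω |s - s'| < Real.log c := by
    have hlim : Tendsto (fun s' => |s - s'|) (𝓝 s) (𝓝 0) :=
      (by fun_prop : Continuous fun s' => |s - s'|).tendsto' _ _ (by simp)
    exact (hω.tendsto.comp hlim).eventually_lt_const (hω0.symm ▸ Real.log_pos hc)
  obtain ⟨hself, hpos, hsymm, htri, hbasis⟩ := hd s hs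
  refine ⟨_, inter_mem hωc hJs, _, inter_mem hKx ((hbasis x₀).mem_of_mem (half_pos hr)), ?_⟩
  rintro s' ⟨hωs', hs'⟩ x ⟨hxK, hxr : d s x₀ x < r / 2⟩ y ⟨hyK, hyr : d s x₀ y < r / 2⟩
  obtain ⟨hself', hpos', -⟩ := hd s' (hJI hs')
  rcases eq_or_ne x y with rfl | hxy
  · simp [hself, hself']
  have hinf : sInf ((fun u => d u x y) '' J) < r := calc
    sInf ((fun u => d u x y) '' J) ≤ d s x y :=
      csInf_le ⟨0, forall_mem_image.2 fun u hu => hd.nonneg (hJI hu) x y⟩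
        (mem_image_of_mem _ (mem_of_mem_nhds hJs))
    _ ≤ d s x x₀ + d s x₀ y := htri x x₀ y
    _ < r := by rw [hsymm x x₀]; linarith
  exact le_mul_of_abs_log_div_le_log (hpos x y hxy) (hpos' x y hxy) (one_pos.trans hc)
    ((hlog s (mem_of_mem_nhds hJs) s' hs' x hxK y hyK hxy hinf).trans hωs'.le)

end MetricFamily

section Causal

variable {X : Type*} {I : Set ℝ} {d : ℝ → X → X → ℝ} {h : ℝ → X → ℝ}
  {α : ℝ → ℝ} {β : ℝ → X} {a b c s H : ℝ} {V : Set X}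

theorem ACOn.integral_abs_deriv (hα : ACOn rdist α a b) (hab : a ≤ b)
    (hdir : FutureDirected α a b ∨ PastDirected α a b) :
    ∫ t in a..b, |deriv α t| = |α b - α a| := by
  have hαac : AbsolutelyContinuousOnInterval α a b := ACOn.absolutelyContinuousOnInterval hα hab
  rw [← hαac.integral_deriv_eq_sub, intervalIntegral.integral_of_le hab,
    intervalIntegral.integral_of_le hab, integral_Ioc_eq_integral_Ioo,
    integral_Ioc_eq_integral_Ioo]
  refine integral_abs_eq_abs_integral (hdir.imp (fun hpos => ?_) fun hneg => ?_)
  · exact (ae_restrict_iff' measurableSet_Ioo).2 (hpos.mono fun t ht hmem => (ht hmem).le)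
  · exact (ae_restrict_iff' measurableSet_Ioo).2 (hneg.mono fun t ht hmem => (ht hmem).le)

theorem CausalCurve.mono {p q : ℝ} (hγ : CausalCurve I d h α β a b) (hp : a ≤ p) (hpq : p < q)
    (hq : q ≤ b) : CausalCurve I d h α β p q := by
  obtain ⟨⟨-, hα, hβ, hαI⟩, hdir, hcausal⟩ := hγ
  have hsub : Ioo p q ⊆ Ioo a b := Ioo_subset_Ioo hp hq
  exact ⟨⟨hpq, hα.mono hp hq, fun s hs => (hβ s hs).mono hp hq,
      fun t ht => hαI t (Icc_subset_Icc hp hq ht)⟩,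
    hdir.imp (fun hpos => hpos.mono fun t ht hmem => ht (hsub hmem))
      fun hneg => hneg.mono fun t ht hmem => ht (hsub hmem),
    hcausal.mono fun t ht hmem => ht (hsub hmem)⟩

variable [TopologicalSpace X]

theorem CausalCurve.ae_mSpeed_le (hγ : CausalCurve I d h α β a b) (hd : IsMetricFamily I d)
    (hs : s ∈ I) (hc : 0 < c) (hcomp : ∀ t ∈ Icc a b, DistComparableOn (d s) (d (α t)) c V)
    (hβV : MapsTo β (Icc a b) V) (hh : ∀ t ∈ Icc a b, h (α t) (β t) ∈ Icc 0 H) :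
    ∀ᵐ t : ℝ, t ∈ Ioo a b → mSpeed (d s) β t ≤ c * H * |deriv α t| := by
  obtain ⟨⟨hab, -, hβ, hαI⟩, -, hcausal⟩ := hγ
  filter_upwards [hcausal, hd.ae_mSpeed_le_const_mul_genSpeed hs hc hβ hab.le
    (hβV.mono_left Ioo_subset_Icc_self)] with t hineq hspeed ht
  have htab := Ioo_subset_Icc_self ht
  have hgen : genSpeed d β (α t) t ≤ h (α t) (β t) * |deriv α t| := by
    refine le_of_sq_le_sq ?_ (mul_nonneg (hh t htab).1 (abs_nonneg _))
    rw [mul_pow, sq_abs]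
    exact hineq ht
  calc mSpeed (d s) β t ≤ c * genSpeed d β (α t) t := hspeed ht _ (hαI t htab) (hcomp t htab)
    _ ≤ c * (H * |deriv α t|) := by gcongr; exact hgen.trans (by gcongr; exact (hh t htab).2)
    _ = c * H * |deriv α t| := (mul_assoc _ _ _).symm

theorem CausalCurve.dist_le (hγ : CausalCurve I d h α β a b) (hd : IsMetricFamily I d)
    (hs : s ∈ I) (hc : 0 < c) (hcomp : ∀ t ∈ Icc a b, DistComparableOn (d s) (d (α t)) c V)
    (hβV : MapsTo β (Icc a b) V) (hh : ∀ t ∈ Icc a b, h (α t) (β t) ∈ Icc 0 H) :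
    d s (β a) (β b) ≤ c * H * |α b - α a| := by
  obtain ⟨hab, hα, hβ, -⟩ := hγ.1
  calc d s (β a) (β b) ≤ ∫ t in a..b, mSpeed (d s) β t :=
        @ACOn.dist_le_integral_mSpeed X (hd.pseudoMetricSpace hs) β a b (hβ s hs) hab.le
    _ ≤ ∫ t in a..b, c * H * |deriv α t| :=
        intervalIntegral_mono_of_ae_Ioo hab.le (hd.integrableOn_mSpeed hs (hβ s hs) hab.le)
          ((hα.integrableOn_deriv hab.le).abs.const_mul _) (hγ.ae_mSpeed_le hd hs hc hcomp hβV hh)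
    _ = c * H * |α b - α a| := by
        rw [intervalIntegral.integral_const_mul, hα.integral_abs_deriv hab.le hγ.2.1]

theorem CausalCurve.clockLipschitzOn (hγ : CausalCurve I d h α β a b) (hd : IsMetricFamily I d)
    (hs : s ∈ I) (hc : 0 < c) (hcomp : ∀ t ∈ Icc a b, DistComparableOn (d s) (d (α t)) c V)
    (hβV : MapsTo β (Icc a b) V) (hh : ∀ t ∈ Icc a b, h (α t) (β t) ∈ Icc 0 H) :
    ClockLipschitzOn (d s) α β (c * H) (Icc a b) := by
  refine @ClockLipschitzOn.of_lt X (hd.pseudoMetricSpace hs) _ _ _ _ fun t ht u hu htu => ?_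
  have hsub : Icc t u ⊆ Icc a b := Icc_subset_Icc ht.1 hu.2
  exact (hγ.mono ht.1 htu hu.2).dist_le hd hs hc (fun r hr => hcomp r (hsub hr))
    (hβV.mono_left hsub) fun r hr => hh r (hsub hr)

theorem CondC.exists_mem_nhds_clockLipschitzOn [WeaklyLocallyCompactSpace X]
    (hdC : CondC I d) (hd : IsMetricFamily I d) (hI : I ∈ 𝓝 s)
    (hnonneg : ∀ s ∈ I, ∀ x, 0 ≤ h s x) {x : X}
    (hcont : UpperSemicontinuousAt (fun z : ℝ × X => h z.1 z.2) (s, x)) {C : ℝ}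
    (hC : h s x < C) :
    ∃ W ∈ 𝓝 (s, x), ∀ {α β a b}, CausalCurve I d h α β a b →
      (∀ t ∈ Icc a b, (α t, β t) ∈ W) → ClockLipschitzOn (d s) α β C (Icc a b) := by
  have hs : s ∈ I := mem_of_mem_nhds hI
  obtain ⟨H, hH, hHC⟩ := exists_between hC
  have hHpos : 0 < H := (hnonneg s hs x).trans_lt hH
  have hc : 1 < C / H := (one_lt_div hHpos).2 hHC
  obtain ⟨U, hU, V, hV, hcomp⟩ := hdC.exists_distComparableOn hd hI x hc
  refine ⟨_, inter_mem (prod_mem_nhds hU hV) (hcont H hH), fun {α β a b} hγ hW => ?_⟩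
  rw [← div_mul_cancel₀ C hHpos.ne']
  exact hγ.clockLipschitzOn hd hs (one_pos.trans hc) (fun t ht => hcomp _ (hW t ht).1.1)
    (fun t ht => (hW t ht).1.2)
    fun t ht => ⟨hnonneg _ (hγ.1.2.2.2 t ht) _, (hW t ht).2.le⟩

end Causal

section Limit

theorem tendsto_prod_nhds_of_tendstoUniformlyOn {ι T Y : Type*} [TopologicalSpace T]
    [UniformSpace Y] {F : ι → T → Y} {f : T → Y} {l : Filter ι} {S : Set T} {t : T}
    (hF : TendstoUniformlyOn F f l S) (hS : S ∈ 𝓝 t) (hf : ContinuousAt f t) :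
    Tendsto (fun p : ι × T => F p.1 p.2) (l ×ˢ 𝓝 t) (𝓝 (f t)) :=
  (Uniform.tendsto_congr <| (tendstoUniformlyOn_iff_tendsto.1 hF).mono_left <|
    prod_mono_right l (le_principal_iff.2 hS)).1 (hf.tendsto.comp tendsto_snd)

variable {X : Type*} [TopologicalSpace X] {I : Set ℝ} {d : ℝ → X → X → ℝ} {h : ℝ → X → ℝ}
  {ι : Type*} {l : Filter ι} {a b t : ℝ}

theorem IsCompatibleProdMetric.tendsto_prod_nhds {D : ℝ × X → ℝ × X → ℝ}
    (hD : IsCompatibleProdMetric D) {γ : ι → ℝ → ℝ × X} {γ₀ : ℝ → ℝ × X} {S : Set ℝ}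
    (hγ : ∀ ε > (0 : ℝ), ∀ᶠ j in l, ∀ t ∈ S, D (γ j t) (γ₀ t) < ε) (hS : S ∈ 𝓝 t)
    (hγ₀ : ContinuousAt γ₀ t) :
    Tendsto (fun p : ι × ℝ => γ p.1 p.2) (l ×ˢ 𝓝 t) (𝓝 (γ₀ t)) := by
  obtain ⟨hself, -, hsymm, htri, hbasis⟩ := hD
  let hmetric := pseudoMetricSpaceOfHasBasis D hself hsymm htri hbasis
  refine @tendsto_prod_nhds_of_tendstoUniformlyOn ι ℝ (ℝ × X) _ hmetric.toUniformSpace γ γ₀ l S t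
    ((@Metric.tendstoUniformlyOn_iff (ℝ × X) ℝ ι hmetric γ γ₀ l S).2 fun ε hε => ?_) hS hγ₀
  filter_upwards [hγ ε hε] with j hj t ht
  exact (hsymm _ _).trans_lt (hj t ht)

theorem CurveIn.continuousAt {α : ℝ → ℝ} {β : ℝ → X} (hγ : CurveIn I d α β a b)
    (hd : IsMetricFamily I d) (ht : t ∈ Ioo a b) : ContinuousAt (fun u => (α u, β u)) t := by
  obtain ⟨hab, hα, hβ, hαI⟩ := hγ
  have hs : α t ∈ I := hαI t (Ioo_subset_Icc_self ht)
  exact ((ACOn.continuousOn hα hab.le : ContinuousOn α _).continuousAt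
    (Icc_mem_nhds ht.1 ht.2)).prodMk (hd.continuousAt hs (hβ _ hs) ht)

theorem exists_Icc_eventually_forall_mem {Y : Type*} [TopologicalSpace Y] {γ : ι → ℝ → Y} {y : Y}
    (hγ : Tendsto (fun p : ι × ℝ => γ p.1 p.2) (l ×ˢ 𝓝 t) (𝓝 y)) {W : Set Y} (hW : W ∈ 𝓝 y)
    (ht : t ∈ Ioo a b) :
    ∃ p q, t ∈ Ioo p q ∧ Icc p q ⊆ Ioo a b ∧ ∀ᶠ j in l, ∀ u ∈ Icc p q, γ j u ∈ W := by
  obtain ⟨P, hP, Q, hQ, hPQ⟩ := eventually_prod_iff.1 (hγ.eventually hW)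
  obtain ⟨p, q, -, hpq, hsub⟩ :=
    exists_Icc_mem_subset_of_mem_nhds (inter_mem hQ (Ioo_mem_nhds ht.1 ht.2))
  exact ⟨p, q, Icc_mem_nhds_iff.1 hpq, fun u hu => (hsub hu).2,
    hP.mono fun j hj u hu => hPQ hj (hsub hu).1⟩

variable [WeaklyLocallyCompactSpace X] [l.NeBot] {α : ι → ℝ → ℝ} {β : ι → ℝ → X} {α₀ : ℝ → ℝ}
  {β₀ : ℝ → X}

theorem exists_clockLipschitzOn_of_tendsto_causalCurve (hdC : CondC I d)
    (hd : IsMetricFamily I d) (hI : I ∈ 𝓝 (α₀ t)) (hnonneg : ∀ s ∈ I, ∀ x, 0 ≤ h s x)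
    (hcont : UpperSemicontinuousAt (fun z : ℝ × X => h z.1 z.2) (α₀ t, β₀ t))
    (hcausal : ∀ᶠ j in l, CausalCurve I d h (α j) (β j) a b)
    (hlim : ∀ t ∈ Ioo a b, Tendsto (fun p : ι × ℝ => (α p.1 p.2, β p.1 p.2)) (l ×ˢ 𝓝 t)
      (𝓝 (α₀ t, β₀ t)))
    (ht : t ∈ Ioo a b) {C : ℝ} (hC : h (α₀ t) (β₀ t) < C) :
    ∃ p q, t ∈ Ioo p q ∧ Icc p q ⊆ Ioo a b ∧
      ClockLipschitzOn (d (α₀ t)) α₀ β₀ C (Icc p q) := by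
  obtain ⟨W, hW, hlip⟩ := hdC.exists_mem_nhds_clockLipschitzOn hd hI hnonneg hcont hC
  obtain ⟨p, q, htpq, hsub, hmem⟩ :=
    exists_Icc_eventually_forall_mem (γ := fun j u => (α j u, β j u)) (hlim t ht) hW ht
  have hpq : p < q := htpq.1.trans htpq.2
  have hp := (hsub (left_mem_Icc.2 hpq.le)).1.le
  have hq := (hsub (right_mem_Icc.2 hpq.le)).2.le
  have hpointwise : ∀ u ∈ Icc p q, Tendsto (fun j => (α j u, β j u)) l (𝓝 (α₀ u, β₀ u)) :=
    fun u hu => (hlim u (hsub hu)).comp (tendsto_id.prodMk tendsto_const_nhds)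
  refine ⟨p, q, htpq, hsub, @ClockLipschitzOn.of_tendsto X
    (hd.pseudoMetricSpace (mem_of_mem_nhds hI)) _ _ _ _ _ l _ _ _ ?_
    (fun u hu => (hpointwise u hu).fst_nhds) fun u hu => (hpointwise u hu).snd_nhds⟩
  filter_upwards [hcausal, hmem] with j hj hjW
  exact hlip (hj.mono hp hpq hq) hjW

/-- The hypothesis `hlim` is continuous convergence, that is, locally uniform convergence to a
continuous limit, stated without choosing a metric on `ℝ × X`. -/
theorem causal_stable_under_uniform_convergence_general (hIopen : IsOpen I)
    (hd : IsMetricFamily I d) (hdC : CondC I d) (hnonneg : ∀ s ∈ I, ∀ x, 0 ≤ h s x)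
    (hcont : UpperSemicontinuousOn (fun z : ℝ × X => h z.1 z.2) (I ×ˢ univ))
    (hcausal : ∀ᶠ j in l, CausalCurve I d h (α j) (β j) a b) (hα₀ : ACOn rdist α₀ a b)
    (hα₀I : ∀ t ∈ Ioo a b, α₀ t ∈ I)
    (hlim : ∀ t ∈ Ioo a b, Tendsto (fun p : ι × ℝ => (α p.1 p.2, β p.1 p.2)) (l ×ˢ 𝓝 t)
      (𝓝 (α₀ t, β₀ t))) :
    CausalIneq d h α₀ β₀ a b := by
  obtain ⟨j, ⟨hab, -⟩, -⟩ := hcausal.exists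
  filter_upwards [ae_tendsto_average hab.le (hα₀.integrableOn_deriv hab.le).abs] with t havg ht
  have hI : I ∈ 𝓝 (α₀ t) := hIopen.mem_nhds (hα₀I t ht)
  have hcontAt : UpperSemicontinuousAt (fun z : ℝ × X => h z.1 z.2) (α₀ t, β₀ t) := fun C hC =>
    (hcont _ ⟨hα₀I t ht, mem_univ _⟩ C hC).filter_mono
      ((hIopen.prod isOpen_univ).nhdsWithin_eq ⟨hα₀I t ht, mem_univ _⟩).ge
  have hle : ∀ C > h (α₀ t) (β₀ t), genSpeed d β₀ (α₀ t) t ≤ C * |deriv α₀ t| := by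
    intro C hC
    obtain ⟨p, q, htpq, hsub, hclock⟩ :=
      exists_clockLipschitzOn_of_tendsto_causalCurve hdC hd hI hnonneg hcontAt hcausal hlim ht hC
    have hpq : p ≤ q := (htpq.1.trans htpq.2).le
    exact hclock.genSpeed_le hd (hα₀I t ht)
      (hα₀.mono (hsub (left_mem_Icc.2 hpq)).1.le (hsub (right_mem_Icc.2 hpq)).2.le) htpq (havg ht)
  have hgen : genSpeed d β₀ (α₀ t) t ≤ h (α₀ t) (β₀ t) * |deriv α₀ t| :=
    ge_of_tendsto (((continuous_mul_const |deriv α₀ t|).tendsto _).mono_left nhdsWithin_le_nhds)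
      (eventually_nhdsWithin_of_forall (s := Ioi (h (α₀ t) (β₀ t))) hle)
  rw [← sq_abs (deriv α₀ t), ← mul_pow]
  exact pow_le_pow_left₀ (genSpeed_nonneg (hd.nonneg (hα₀I t ht)) β₀ t) hgen 2

end Limit

/-- **Stability of causality** (Proposition 4.5): a uniform limit of causal curves
whose time component has a.e. positive (or a.e. negative) derivative is causal. -/
theorem causal_stable_under_uniform_convergence {X : Type*} [TopologicalSpace X]
    [LocallyCompactSpace X]
    (I : Set ℝ) (hIopen : IsOpen I) (hIord : I.OrdConnected) (hIne : I.Nonempty)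
    (d : ℝ → X → X → ℝ) (hd : IsMetricFamily I d) (hdC : CondC I d)
    (h : ℝ → X → ℝ) (hpos : ∀ s ∈ I, ∀ x : X, 0 < h s x)
    (hcont : ContinuousOn (fun z : ℝ × X => h z.1 z.2) (I ×ˢ (Set.univ : Set X)))
    (D : (ℝ × X) → (ℝ × X) → ℝ) (hD : IsCompatibleProdMetric D)
    (a b : ℝ) (hab : a < b)
    (α : ℕ → ℝ → ℝ) (β : ℕ → ℝ → X) (α₀ : ℝ → ℝ) (β₀ : ℝ → X)
    (hcausal : ∀ j, CausalCurve I d h (α j) (β j) a b)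
    (hAC₀ : CurveIn I d α₀ β₀ a b)
    (hdir : FutureDirected α₀ a b ∨ PastDirected α₀ a b)
    (hunif : ∀ ε > (0 : ℝ), ∀ᶠ j in Filter.atTop,
      ∀ t ∈ Set.Icc a b, D (α j t, β j t) (α₀ t, β₀ t) < ε) :
    CausalIneq d h α₀ β₀ a b := by
  exact causal_stable_under_uniform_convergence_general hIopen hd hdC
    (fun s hs x => (hpos s hs x).le) hcont.upperSemicontinuousOn (.of_forall hcausal) hAC₀.2.1
    (fun t ht => hAC₀.2.2.2 t (Ioo_subset_Icc_self ht))
    fun t ht => hD.tendsto_prod_nhds hunif (Icc_mem_nhds ht.1 ht.2) (hAC₀.continuousAt hd ht)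
end
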